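/- arXiv:1312.4597 — 2 statements merged into one kernel-verified Lean document; each statement's English description precedes it below -/
import Mathlib

section
/- Let S be a convex polygon with at least four sides, contained in the closed unit disc centered at the origin, with 0 ∈ S. Let v_1, …, v_n be the vertices of −S in clockwise order, and for each i let E^i = {λ(v_{i−1} − v_i) + μ(v_{i+1} − v_i) : λ, μ ≥ 0} be the wedge of −S at v_i. Suppose v_a and v_b are non-adjacent vertices of −S at which, for some direction d not parallel to any side of S, the two supporting lines of −S parallel to d touch −S. Then for all integers k, l ≥ 1 and every δ > 0 there exist a finite indexed family X of positive homothetic copies of S, a finite indexed family A of translates of the wedge E^a, and a finite indexed family B of translates of the wedge E^b, all contained in a single disc of radius δ, such that: (i) every member of A intersects exactly k members of X and every member of B intersects exactly l members of X; and (ii) for every 2-coloring of the members of X by red and blue, either some member of A intersects only red members of X, or some member of B intersects only blue members of X. -/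
/-!
Write `C = -S` and `e = v a - v b`. Since the wedge at a vertex of `C`, moved to that vertex,
contains `C` (`wedge_of_neighbours`), a homothet `ε • S + p` meets a translate of the wedge at
`v a` exactly when its single vertex `p - ε • v a` lies in that translate (`inter_wedge_iff`); the
same holds for `v b`. So a homothet amounts to a pair of points with difference `ε • e`, the first
tested against the wedges `Ea`, the second against the wedges `Eb`.

The families are built by induction on `k` and `l` (`config_step`). For `k = 0` or `l = 0` a single
wedge and no homothets suffice. For `(k + 1, l + 1)` one takes a tiny configuration for
`(k, l + 1)`, a tiny configuration for `(k + 1, l)`, and one new homothet that is met by all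
`Ea`-wedges but no `Eb`-wedge of the first, and by all `Eb`-wedges but no `Ea`-wedge of the second,
while the wedges of either configuration miss the homothets of the other. If the new homothet is
red, the first configuration provides a monochromatic wedge, and if it is blue the second does.

The required relative position (`Gadget`) comes from the coordinates `t • d + s • e`. As `v a` and
`v b` are not adjacent, `e` is interior to `Eb` and `-e` to `Ea`, hence `Eb = {s ≥ f t}` and
`Ea = {s ≤ -g t}` for continuous `f`, `g` (`wedge_epigraph`), and `f`, `g` are positive off `0`
since the lines parallel to `d` at `v a` and `v b` are supporting. By the intermediate value theorem
`f t = f (t - 1)` for some `t`, and after possibly replacing `d` by `-d` also `g t ≤ g (t - 1)`.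
Placing the configurations at `0` and `d - η • e` for a small `η > 0`, the second vertex of the new
homothet just below the graph of `f` over `t`, and its first vertex just below the graph of
`-g` over `t`, makes all requirements hold strictly, hence robustly (`gadget_of_crossing`).
-/

/-!
STATEMENT 6: For a convex polygon S with at least four sides contained in the
closed unit disc with 0 ∈ S, with the vertices v_1, …, v_n of −S in cyclic
order, wedges E^i at the vertices, and two non-adjacent vertices v_a, v_b
touched by the two supporting lines of −S parallel to a direction d not
parallel to any side: for all k, l ≥ 1 and δ > 0 there are finite families X
of positive homothetic copies of S, A of translates of the wedge E^a and B of
translates of the wedge E^b, with all members of X and all apices of the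
wedges inside a single disc of radius δ, such that every member of A meets
exactly k members of X, every member of B meets exactly l members of X, and
for every red/blue coloring of X some member of A meets only red members of X
or some member of B meets only blue members of X.
-/

noncomputable section

open scoped RealInnerProductSpace

abbrev Plane : Type := EuclideanSpace ℝ (Fin 2)

/-- The homothetic copy `ε·S + p` of a set `S ⊆ ℝ²`. -/
def homCopy (ε : ℝ) (p : Plane) (S : Set Plane) : Set Plane :=
  (fun x => ε • x + p) '' S

/-- Every point of the finite set `P` is an extreme point of its convex hull. -/
def StrictlyConvexPosition (P : Finset Plane) : Prop :=
  ∀ p ∈ P, p ∈ Set.extremePoints ℝ (convexHull ℝ (P : Set Plane))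

/-- The reflection of a set through the origin. -/
def negSet (S : Set Plane) : Set Plane := (fun x => -x) '' S

/-- The convex wedge (cone) with apex at the origin spanned by the directions
`w₁` and `w₂`. -/
def wedge (w₁ w₂ : Plane) : Set Plane :=
  {x | ∃ lam mu : ℝ, 0 ≤ lam ∧ 0 ≤ mu ∧ x = lam • w₁ + mu • w₂}


/-! ### Wedges at the vertices of a convex set -/

/-- Two independent vectors of the plane have dual coordinate functionals, which
describe the wedge they span by two linear inequalities. -/
lemma exists_coords {w₁ w₂ : Plane} (h : LinearIndependent ℝ ![w₁, w₂]) :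
    ∃ L₁ L₂ : Plane →L[ℝ] ℝ, (∀ z, z = L₁ z • w₁ + L₂ z • w₂) ∧
      (∀ z, z ∈ wedge w₁ w₂ ↔ 0 ≤ L₁ z ∧ 0 ≤ L₂ z) := by
  let B := basisOfLinearIndependentOfCardEqFinrank h (by simp)
  have hB : ∀ i, B i = ![w₁, w₂] i := fun i => by simp [B]
  have hrep : ∀ z, z = B.coord 0 z • w₁ + B.coord 1 z • w₂ := by
    intro z
    have := B.sum_repr z
    rw [Fin.sum_univ_two, hB, hB] at this
    simpa using this.symm
  refine ⟨(B.coord 0).toContinuousLinearMap, (B.coord 1).toContinuousLinearMap, hrep, ?_⟩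
  intro z
  constructor
  · rintro ⟨lam, mu, h₁, h₂, rfl⟩
    have e₁ : w₁ = B 0 := by simp [hB]
    have e₂ : w₂ = B 1 := by simp [hB]
    simp [e₁, e₂, -Module.Basis.coord_apply, Module.Basis.coord_apply, h₁, h₂]
  · rintro ⟨h₁, h₂⟩
    exact ⟨_, _, h₁, h₂, hrep z⟩

/-- Three distinct extreme points are not collinear. -/
lemma linearIndependent_of_extreme {C : Set Plane} {m x y : Plane}
    (hm : m ∈ Set.extremePoints ℝ C) (hx : x ∈ Set.extremePoints ℝ C)
    (hy : y ∈ Set.extremePoints ℝ C) (hxm : x ≠ m) (hym : y ≠ m) (hxy : x ≠ y) :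
    LinearIndependent ℝ ![x - m, y - m] := by
  rw [LinearIndependent.pair_iff' (sub_ne_zero.2 hxm)]
  intro t ht
  have hy' : y = m + t • (x - m) := by rw [ht]; abel
  have h0 : t ≠ 0 := by rintro rfl; exact hym (by simpa using hy')
  have h1 : t ≠ 1 := by rintro rfl; exact hxy (by simpa using hy'.symm)
  rw [mem_extremePoints] at hm hx hy
  -- whichever of the three points lies between the other two is not extreme
  rcases lt_or_gt_of_ne h0 with h | h
  · refine hxm (hm.2 x hx.1 y hy.1 ⟨-t / (1 - t), 1 / (1 - t), ?_, ?_, ?_, ?_⟩).1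
    · exact div_pos (by linarith) (by linarith)
    · exact div_pos (by linarith) (by linarith)
    · have : 1 - t ≠ 0 := by linarith
      field_simp; ring
    · have : 1 - t ≠ 0 := by linarith
      rw [hy']
      match_scalars <;> field_simp <;> ring
  rcases lt_or_gt_of_ne h1 with h' | h'
  · refine hym (hy.2 m hm.1 x hx.1 ⟨1 - t, t, by linarith, h, by ring, ?_⟩).1.symm
    rw [hy']; module
  · refine hxm (hx.2 m hm.1 y hy.1 ⟨1 - 1 / t, 1 / t, ?_, by positivity, by ring, ?_⟩).1.symm
    · rw [sub_pos, div_lt_one h]; exact h'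
    · rw [hy']
      match_scalars <;> field_simp
      ring

/-- A convex set containing a nondegenerate triangle has nonempty interior. -/
lemma interior_nonempty_of_triangle {C : Set Plane} (hC : Convex ℝ C) {m x y : Plane}
    (hm : m ∈ C) (hx : x ∈ C) (hy : y ∈ C)
    (hli : LinearIndependent ℝ ![x - m, y - m]) : (interior C).Nonempty := by
  have hai : AffineIndependent ℝ ![m, x, y] := by
    rw [affineIndependent_iff_linearIndependent_vsub ℝ _ (0 : Fin 3)]
    refine (linearIndependent_equiv' (finSuccAboveEquiv (0 : Fin 3)) ?_).1 hli
    ext i : 1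
    fin_cases i <;> simp [finSuccAboveEquiv]
  have htop := hai.affineSpan_eq_top_iff_card_eq_finrank_add_one.2 (by simp)
  refine (interior_convexHull_nonempty_iff_affineSpan_eq_top.2 htop).mono
    (interior_mono (convexHull_min ?_ hC))
  rintro _ ⟨i, rfl⟩
  fin_cases i <;> simp [hm, hx, hy]

/-- A line through two points of a convex set `C` whose segment lies in the frontier of `C`
supports `C`. -/
lemma exists_support {C : Set Plane} (hC : Convex ℝ C) (hne : (interior C).Nonempty)
    {m x : Plane} (hm : m ∈ C) (hx : x ∈ C) (hseg : segment ℝ m x ⊆ frontier C) :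
    ∃ φ : Plane →L[ℝ] ℝ, φ x = φ m ∧ (∀ z ∈ C, φ z ≤ φ m) ∧
      (∀ z ∈ interior C, φ z < φ m) := by
  have hmid : midpoint ℝ m x ∉ interior C := (hseg (midpoint_mem_segment m x)).2
  obtain ⟨φ, hφ⟩ := geometric_hahn_banach_open_point hC.interior isOpen_interior hmid
  have hle : ∀ z ∈ C, φ z ≤ φ (midpoint ℝ m x) := by
    intro z hz
    have hz' : z ∈ closure (interior C) := by
      rw [hC.closure_interior_eq_closure_of_nonempty_interior hne]
      exact subset_closure hz
    exact closure_minimal (fun a ha => (hφ a ha).le)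
      (isClosed_le φ.continuous continuous_const) hz'
  have hval : φ (midpoint ℝ m x) = (φ m + φ x) / 2 := by
    rw [midpoint_eq_smul_add]; simp; ring
  have h1 := hle m hm
  have h2 := hle x hx
  have e1 : φ x = φ m := by linarith
  have e2 : φ (midpoint ℝ m x) = φ m := by linarith
  rw [e2] at hφ hle
  exact ⟨φ, e1, hle, hφ⟩

/-- The wedge spanned at a vertex `m` by its two neighbours `x` and `y`, translated to `m`,
contains the whole convex set, and a point not joined to `m` by a boundary segment
has both its coordinates positive. -/
lemma wedge_of_neighbours {C : Set Plane} (hC : Convex ℝ C) {m x y : Plane}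
    (hm : m ∈ Set.extremePoints ℝ C) (hx : x ∈ Set.extremePoints ℝ C)
    (hy : y ∈ Set.extremePoints ℝ C) (hxm : x ≠ m) (hym : y ≠ m) (hxy : x ≠ y)
    (hsx : segment ℝ m x ⊆ frontier C) (hsy : segment ℝ m y ⊆ frontier C) :
    ∃ L₁ L₂ : Plane →L[ℝ] ℝ, (∀ z, z = L₁ z • (x - m) + L₂ z • (y - m)) ∧
      (∀ z, z ∈ wedge (x - m) (y - m) ↔ 0 ≤ L₁ z ∧ 0 ≤ L₂ z) ∧
      (∀ z ∈ C, z - m ∈ wedge (x - m) (y - m)) ∧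
      (∀ z ∈ C, ¬ segment ℝ m z ⊆ frontier C → 0 < L₁ (z - m) ∧ 0 < L₂ (z - m)) := by
  have hli := linearIndependent_of_extreme hm hx hy hxm hym hxy
  have hmC := extremePoints_subset hm
  have hxC := extremePoints_subset hx
  have hyC := extremePoints_subset hy
  have hne := interior_nonempty_of_triangle hC hmC hxC hyC hli
  obtain ⟨L₁, L₂, hrep, hw⟩ := exists_coords hli
  obtain ⟨φ, hφx, hφ, hφi⟩ := exists_support hC hne hmC hxC hsx
  obtain ⟨ψ, hψy, hψ, hψi⟩ := exists_support hC hne hmC hyC hsy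
  obtain ⟨o, ho⟩ := hne
  have eφ : ∀ z, φ z - φ m = L₂ (z - m) * (φ y - φ m) := by
    intro z
    have := congrArg φ (hrep (z - m))
    simp only [map_add, map_sub, map_smul, smul_eq_mul, hφx] at this
    simpa using this
  have eψ : ∀ z, ψ z - ψ m = L₁ (z - m) * (ψ x - ψ m) := by
    intro z
    have := congrArg ψ (hrep (z - m))
    simp only [map_add, map_sub, map_smul, smul_eq_mul, hψy] at this
    simpa using this
  have hφy : φ y - φ m < 0 := by
    rcases (sub_nonpos.2 (hφ y hyC)).lt_or_eq with h | h
    · exact h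
    · have h1 := eφ o
      have h2 := hφi o ho
      rw [h] at h1
      linarith
  have hψx : ψ x - ψ m < 0 := by
    rcases (sub_nonpos.2 (hψ x hxC)).lt_or_eq with h | h
    · exact h
    · have h1 := eψ o
      have h2 := hψi o ho
      rw [h] at h1
      linarith
  have h₁ : ∀ z ∈ C, 0 ≤ L₁ (z - m) := by
    intro z hz
    have h1 := eψ z
    have h2 := hψ z hz
    by_contra! h
    have := mul_pos_of_neg_of_neg h hψx
    linarith
  have h₂ : ∀ z ∈ C, 0 ≤ L₂ (z - m) := by
    intro z hz
    have h1 := eφ z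
    have h2 := hφ z hz
    by_contra! h
    have := mul_pos_of_neg_of_neg h hφy
    linarith
  have hfr : ∀ χ : Plane →L[ℝ] ℝ, (∀ z ∈ interior C, χ z < χ m) → ∀ z ∈ C, χ z = χ m →
      segment ℝ m z ⊆ frontier C := by
    rintro χ hχ z hz hzm q hq
    refine ⟨subset_closure (hC.segment_subset hmC hz hq), fun hqi => ?_⟩
    obtain ⟨s, t, hs, ht, hst, rfl⟩ := hq
    have := hχ _ hqi
    simp only [map_add, map_smul, smul_eq_mul, hzm, ← add_mul, hst, one_mul] at this
    exact lt_irrefl _ this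
  refine ⟨L₁, L₂, hrep, hw, fun z hz => (hw _).2 ⟨h₁ z hz, h₂ z hz⟩, fun z hz hns => ⟨?_, ?_⟩⟩
  · refine lt_of_le_of_ne (h₁ z hz) fun h => hns (hfr ψ hψi z hz ?_)
    have := eψ z
    rw [← h] at this
    linarith
  · refine lt_of_le_of_ne (h₂ z hz) fun h => hns (hfr φ hφi z hz ?_)
    have := eφ z
    rw [← h] at this
    linarith

/-! ### A wedge as an epigraph -/

/-- In the oblique coordinates `(t, s) ↦ t • d + s • e` with `e` inside the wedge, the wedge is
the region above the graph of a function `f`; the function is positive away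
from `0` because the line spanned by `d` meets the wedge only in its apex. -/
lemma wedge_epigraph {w₁ w₂ e d u : Plane} (L₁ L₂ : Plane →L[ℝ] ℝ)
    (hw : ∀ z, z ∈ wedge w₁ w₂ ↔ 0 ≤ L₁ z ∧ 0 ≤ L₂ z)
    (he₁ : 0 < L₁ e) (he₂ : 0 < L₂ e) (hd : d ≠ 0) (hud : ⟪u, d⟫ = 0)
    (h₁ : 0 < ⟪u, w₁⟫) (h₂ : 0 < ⟪u, w₂⟫) :
    ∃ f : ℝ → ℝ, Continuous f ∧ f 0 = 0 ∧ (∀ t, t ≠ 0 → 0 < f t) ∧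
      ∀ t s, t • d + s • e ∈ wedge w₁ w₂ ↔ f t ≤ s := by
  have key : ∀ t s : ℝ, t • d + s • e ∈ wedge w₁ w₂ ↔
      max (-(t * L₁ d) / L₁ e) (-(t * L₂ d) / L₂ e) ≤ s := by
    intro t s
    rw [hw, max_le_iff, div_le_iff₀ he₁, div_le_iff₀ he₂]
    simp only [map_add, map_smul, smul_eq_mul]
    constructor <;> rintro ⟨_, _⟩ <;> constructor <;> linarith
  have hpos : ∀ z ∈ wedge w₁ w₂, z ≠ 0 → 0 < ⟪u, z⟫ := by
    rintro z ⟨lam, mu, hl, hm, rfl⟩ hz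
    rw [inner_add_right, inner_smul_right, inner_smul_right]
    rcases hl.lt_or_eq with hl | rfl
    · have := mul_pos hl h₁
      have := mul_nonneg hm h₂.le
      linarith
    rcases hm.lt_or_eq with hm | rfl
    · have := mul_pos hm h₂
      linarith
    · simp at hz
  have hue : 0 < ⟪u, e⟫ := by
    refine hpos e ((hw e).2 ⟨he₁.le, he₂.le⟩) ?_
    rintro rfl
    simp at he₁
  refine ⟨fun t => max (-(t * L₁ d) / L₁ e) (-(t * L₂ d) / L₂ e), by fun_prop, by simp, ?_, key⟩
  intro t ht
  have hmem := (key t _).2 le_rfl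
  set s := max (-(t * L₁ d) / L₁ e) (-(t * L₂ d) / L₂ e)
  have hz : t • d + s • e ≠ 0 := by
    intro h
    have h' := congrArg (fun z => ⟪u, z⟫) h
    simp only [inner_add_right, inner_smul_right, hud, inner_zero_right] at h'
    have hs : s = 0 := by
      rcases mul_eq_zero.1 (by linarith : s * ⟪u, e⟫ = 0) with h | h
      · exact h
      · exact absurd h hue.ne'
    rw [hs] at h
    simp [ht, hd] at h
  have := hpos _ hmem hz
  rw [inner_add_right, inner_smul_right, inner_smul_right, hud] at this
  exact (pos_iff_pos_of_mul_pos (by linarith : 0 < s * ⟪u, e⟫)).2 hue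

/-! ### The gadget -/

/-- Relative positions for the inductive step. Two clusters lie at `0` and `D`, and a homothet
has its two relevant vertices at `z - ε • e` and `z`. The first of these lies in the wedge `Ea`
placed at the cluster `0` but not in that at `D`; the second lies in the wedge `Eb` placed at `D`
but not in that at `0`; and neither wedge at one cluster meets the other cluster. All of this
survives perturbations `y` of norm at most `ρ`. -/
def Gadget (Ea Eb : Set Plane) (e : Plane) : Prop :=
  ∃ (D z : Plane) (ε ρ : ℝ), 0 < ε ∧ 0 < ρ ∧ ∀ y : Plane, ‖y‖ ≤ ρ →
    (D + y ∉ Ea ∧ -D + y ∉ Ea ∧ D + y ∉ Eb ∧ -D + y ∉ Eb) ∧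
    (z - ε • e + y ∈ Ea ∧ z + y ∉ Eb ∧ z - ε • e - D + y ∉ Ea ∧ z - D + y ∈ Eb)

/-- The gadget at a parameter `t` where the boundary `f` of `Eb` and its translate by one unit
cross. Displacing the second cluster slightly against `e` makes all inequalities strict. -/
lemma gadget_of_crossing {Ea Eb : Set Plane} {d e : Plane}
    (hli : LinearIndependent ℝ ![d, e]) {f g : ℝ → ℝ} (hf : Continuous f) (hg : Continuous g)
    (hf0 : f 0 = 0)
    (hfpos : ∀ t, t ≠ 0 → 0 < f t) (hgpos : ∀ t, t ≠ 0 → 0 < g t)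
    (ha : ∀ t s : ℝ, t • d + s • (-e) ∈ Ea ↔ g t ≤ s)
    (hb : ∀ t s : ℝ, t • d + s • e ∈ Eb ↔ f t ≤ s)
    (t : ℝ) (htf : f t = f (t - 1)) (htg : g t ≤ g (t - 1)) : Gadget Ea Eb e := by
  obtain ⟨T, σ, hrep, -⟩ := exists_coords hli
  have hTσ : ∀ x y : ℝ, T (x • d + y • e) = x ∧ σ (x • d + y • e) = y := by
    intro x y
    have h := hrep (x • d + y • e)
    have h' : (x - T (x • d + y • e)) • d + (y - σ (x • d + y • e)) • e = 0 := by
      rw [sub_smul, sub_smul, ← sub_eq_zero.2 h]; abel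
    have := LinearIndependent.pair_iff.1 hli _ _ h'
    exact ⟨by linarith [this.1], by linarith [this.2]⟩
  have ha' : ∀ z, z ∈ Ea ↔ g (T z) + σ z ≤ 0 := by
    intro z
    conv_lhs => rw [hrep z]
    have := ha (T z) (-σ z)
    rw [neg_smul_neg] at this
    rw [this]
    constructor <;> intro <;> linarith
  have hb' : ∀ z, z ∈ Eb ↔ f (T z) - σ z ≤ 0 := by
    intro z
    conv_lhs => rw [hrep z]
    rw [hb, sub_nonpos]
  have hca : Continuous fun z => g (T z) + σ z := by fun_prop
  have hcb : Continuous fun z => f (T z) - σ z := by fun_prop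
  -- strict inequalities at a point persist under small translations
  have pert : ∀ {F : Plane → ℝ} (_ : Continuous F) (w : Plane),
      (F w < 0 → ∀ᶠ y in nhds (0 : Plane), F (w + y) ≤ 0) ∧
      (0 < F w → ∀ᶠ y in nhds (0 : Plane), ¬ F (w + y) ≤ 0) := by
    intro F hF w
    have hc : ContinuousAt (fun y => F (w + y)) 0 := by fun_prop
    constructor
    · intro h
      filter_upwards [hc.eventually_lt_const (u := 0) (by simpa using h)] with y hy using hy.le
    · intro h
      filter_upwards [hc.eventually_const_lt (u := 0) (by simpa using h)] with y hy
      exact not_le.2 hy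
  obtain ⟨η, hη, h1, h2, h3, h4⟩ : ∃ η : ℝ, 0 < η ∧ η < f 1 ∧ η < f (-1) ∧ η < g 1 ∧
      η < g (-1) := by
    have hm : 0 < min (min (f 1) (f (-1))) (min (g 1) (g (-1))) := by
      simp only [lt_min_iff]
      exact ⟨⟨hfpos _ (by norm_num), hfpos _ (by norm_num)⟩,
        ⟨hgpos _ (by norm_num), hgpos _ (by norm_num)⟩⟩
    obtain ⟨η, h, h'⟩ := exists_between hm
    simp only [lt_min_iff] at h'
    exact ⟨η, h, h'.1.1, h'.1.2, h'.2.1, h'.2.2⟩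
  have ht0 : t ≠ 0 := by
    rintro rfl
    have := hfpos (0 - 1) (by norm_num)
    linarith
  have hε : 0 < f t + g t := add_pos (hfpos t ht0) (hgpos t ht0)
  obtain ⟨D, hD⟩ : ∃ D, D = (1 : ℝ) • d + (-η) • e := ⟨_, rfl⟩
  obtain ⟨z, hz⟩ : ∃ z, z = t • d + (f t - η / 2) • e := ⟨_, rfl⟩
  have c1 := hTσ 1 (-η)
  rw [← hD] at c1
  have c2 := hTσ t (f t - η / 2)
  rw [← hz] at c2
  have c3 : T (z - (f t + g t) • e) = t ∧ σ (z - (f t + g t) • e) = -g t - η / 2 := by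
    have : z - (f t + g t) • e = t • d + (-g t - η / 2) • e := by rw [hz]; module
    rw [this]; exact hTσ _ _
  have ev :
      (∀ᶠ y in nhds (0 : Plane), (D + y ∉ Ea ∧ -D + y ∉ Ea ∧ D + y ∉ Eb ∧ -D + y ∉ Eb) ∧
      (z - (f t + g t) • e + y ∈ Ea ∧ z + y ∉ Eb ∧ z - (f t + g t) • e - D + y ∉ Ea ∧
        z - D + y ∈ Eb)) := by
    simp only [ha', hb']
    refine Filter.Eventually.and (.and ?_ (.and ?_ (.and ?_ ?_)))
      (.and ?_ (.and ?_ (.and ?_ ?_)))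
    · refine (pert hca _).2 ?_
      rw [c1.1, c1.2]; linarith
    · refine (pert hca _).2 ?_
      rw [map_neg, map_neg, c1.1, c1.2]; linarith
    · refine (pert hcb _).2 ?_
      rw [c1.1, c1.2]; linarith
    · refine (pert hcb _).2 ?_
      rw [map_neg, map_neg, c1.1, c1.2]; linarith
    · refine (pert hca _).1 ?_
      rw [c3.1, c3.2]; linarith
    · refine (pert hcb _).2 ?_
      rw [c2.1, c2.2]; linarith
    · refine (pert hca _).2 ?_
      rw [map_sub, map_sub σ, c3.1, c3.2, c1.1, c1.2]; linarith
    · refine (pert hcb _).1 ?_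
      rw [map_sub, map_sub, c2.1, c2.2, c1.1, c1.2]; linarith
  obtain ⟨ρ, hρ, hball⟩ := Metric.eventually_nhds_iff.1 ev
  refine ⟨D, z, f t + g t, ρ / 2, hε, by linarith, fun y hy => hball ?_⟩
  rw [dist_zero_right]; linarith

/-- A crossing as required by `gadget_of_crossing` exists for `d` or for `-d`. -/
lemma exists_gadget {Ea Eb : Set Plane} {d e : Plane}
    (hli : LinearIndependent ℝ ![d, e]) {f g : ℝ → ℝ} (hf : Continuous f) (hg : Continuous g)
    (hf0 : f 0 = 0)
    (hfpos : ∀ t, t ≠ 0 → 0 < f t) (hgpos : ∀ t, t ≠ 0 → 0 < g t)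
    (ha : ∀ t s : ℝ, t • d + s • (-e) ∈ Ea ↔ g t ≤ s)
    (hb : ∀ t s : ℝ, t • d + s • e ∈ Eb ↔ f t ≤ s) : Gadget Ea Eb e := by
  have hc : ContinuousOn (fun t => f t - f (t - 1)) (Set.Icc 0 1) := by fun_prop
  obtain ⟨t, -, ht⟩ := intermediate_value_Icc zero_le_one hc (show (0 : ℝ) ∈ _ by
    have h1 := hfpos (-1) (by norm_num)
    have h2 := hfpos 1 (by norm_num)
    simp only [hf0, zero_sub, sub_self, Set.mem_Icc]
    constructor <;> linarith)
  have ht' : f t = f (t - 1) := by simpa [sub_eq_zero] using ht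
  rcases le_total (g t) (g (t - 1)) with h | h
  · exact gadget_of_crossing hli hf hg hf0 hfpos hgpos ha hb t ht' h
  · have hli' : LinearIndependent ℝ ![-d, e] := by
      rw [LinearIndependent.pair_iff] at hli ⊢
      intro x y hxy
      have := hli (-x) y (by rw [← hxy]; module)
      exact ⟨by linarith [this.1], this.2⟩
    refine gadget_of_crossing hli' (f := fun t => f (-t)) (g := fun t => g (-t)) (by fun_prop)
      (by fun_prop) (by simpa) (fun t ht => hfpos _ (neg_ne_zero.2 ht))
      (fun t ht => hgpos _ (neg_ne_zero.2 ht)) ?_ ?_ (1 - t) ?_ ?_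
    · intro t s
      rw [← ha, smul_neg, neg_smul]
    · intro t s
      rw [← hb, smul_neg, neg_smul]
    · simp only [neg_sub, sub_sub_cancel_left, neg_neg]; exact ht'.symm
    · simpa only [neg_sub, sub_sub_cancel_left, neg_neg] using h

/-! ### The inductive construction -/

/-- A family of homothets `ε i • S + p i` inside the disc of radius `δ` about `c`, together with
apices of translates of the wedges `Ea` and `Eb`, having the properties claimed in the theorem.
Intersection is encoded by the condition that the vertex `p i - ε i • va` (respectively
`p i - ε i • vb`) of the homothet lies in the translated wedge. -/
def Config (S Ea Eb : Set Plane) (va vb : Plane) (k l : ℕ) (c : Plane) (δ : ℝ) : Prop :=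
  ∃ (ι₁ ι₂ ι₃ : Type) (_ : Fintype ι₁) (_ : Fintype ι₂) (_ : Fintype ι₃)
    (ε : ι₁ → ℝ) (p : ι₁ → Plane) (qa : ι₂ → Plane) (qb : ι₃ → Plane),
    (∀ i, 0 < ε i) ∧ (∀ i, homCopy (ε i) (p i) S ⊆ Metric.closedBall c δ) ∧
    (∀ j, qa j ∈ Metric.closedBall c δ) ∧ (∀ j, qb j ∈ Metric.closedBall c δ) ∧
    (∀ j, {i | p i - ε i • va - qa j ∈ Ea}.ncard = k) ∧
    (∀ j, {i | p i - ε i • vb - qb j ∈ Eb}.ncard = l) ∧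
    (∀ red : ι₁ → Bool,
      (∃ j, ∀ i, p i - ε i • va - qa j ∈ Ea → red i = true) ∨
      (∃ j, ∀ i, p i - ε i • vb - qb j ∈ Eb → red i = false))

lemma ncard_option_inl {α β : Type} [Fintype α] [Fintype β] (Q : Option (α ⊕ β) → Prop)
    (h0 : Q none) (hr : ∀ i, ¬ Q (some (.inr i))) :
    {i | Q i}.ncard = {i | Q (some (.inl i))}.ncard + 1 := by
  have : {i | Q i} = insert none ((fun i => some (.inl i)) '' {i | Q (some (.inl i))}) := by
    ext (_ | i | i) <;> simp [h0, hr]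
  rw [this, Set.ncard_insert_of_notMem (by simp) (Set.toFinite _), Set.ncard_image_of_injective]
  intro x y h
  simpa using h

lemma ncard_option_inl' {α β : Type} [Fintype α] [Fintype β] (Q : Option (α ⊕ β) → Prop)
    (h0 : ¬ Q none) (hr : ∀ i, ¬ Q (some (.inr i))) :
    {i | Q i}.ncard = {i | Q (some (.inl i))}.ncard := by
  have : {i | Q i} = (fun i => some (.inl i)) '' {i | Q (some (.inl i))} := by
    ext (_ | i | i) <;> simp [h0, hr]
  rw [this, Set.ncard_image_of_injective]
  intro x y h
  simpa using h

lemma ncard_option_inr {α β : Type} [Fintype α] [Fintype β] (Q : Option (α ⊕ β) → Prop)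
    (h0 : Q none) (hr : ∀ i, ¬ Q (some (.inl i))) :
    {i | Q i}.ncard = {i | Q (some (.inr i))}.ncard + 1 := by
  have : {i | Q i} = insert none ((fun i => some (.inr i)) '' {i | Q (some (.inr i))}) := by
    ext (_ | i | i) <;> simp [h0, hr]
  rw [this, Set.ncard_insert_of_notMem (by simp) (Set.toFinite _), Set.ncard_image_of_injective]
  intro x y h
  simpa using h

lemma ncard_option_inr' {α β : Type} [Fintype α] [Fintype β] (Q : Option (α ⊕ β) → Prop)
    (h0 : ¬ Q none) (hr : ∀ i, ¬ Q (some (.inl i))) :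
    {i | Q i}.ncard = {i | Q (some (.inr i))}.ncard := by
  have : {i | Q i} = (fun i => some (.inr i)) '' {i | Q (some (.inr i))} := by
    ext (_ | i | i) <;> simp [h0, hr]
  rw [this, Set.ncard_image_of_injective]
  intro x y h
  simpa using h

/-- With `k = 0`, no homothets and a single wedge suffice. -/
lemma config_zero_left (S Ea Eb : Set Plane) (va vb : Plane) (l : ℕ) (c : Plane) {δ : ℝ}
    (hδ : 0 < δ) : Config S Ea Eb va vb 0 l c δ := by
  refine ⟨Empty, Unit, Empty, inferInstance, inferInstance, inferInstance, Empty.elim, Empty.elim,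
    fun _ => c, Empty.elim, by simp, by simp, by simp [hδ.le], by simp,
    fun _ => (congrArg Set.ncard (Set.eq_empty_of_isEmpty _)).trans (Set.ncard_empty _), by simp, ?_⟩
  exact fun _ => Or.inl ⟨(), by simp⟩

lemma config_zero_right (S Ea Eb : Set Plane) (va vb : Plane) (k : ℕ) (c : Plane) {δ : ℝ}
    (hδ : 0 < δ) : Config S Ea Eb va vb k 0 c δ := by
  refine ⟨Empty, Empty, Unit, inferInstance, inferInstance, inferInstance, Empty.elim, Empty.elim,
    Empty.elim, fun _ => c, by simp, by simp, by simp, by simp [hδ.le], by simp,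
    fun _ => (congrArg Set.ncard (Set.eq_empty_of_isEmpty _)).trans (Set.ncard_empty _), ?_⟩
  exact fun _ => Or.inr ⟨(), by simp⟩

/-- The inductive step. A tiny configuration for `(k, l + 1)` at `c`, a tiny one for `(k + 1, l)` at
a second point, and one more homothet met by exactly the `Ea`-wedges of the first and
the `Eb`-wedges of the second. If the extra homothet is red, the first configuration yields the
required wedge, otherwise the second one does. -/
lemma config_step {S Ea Eb : Set Plane} {va vb : Plane} {k l : ℕ}
    (hS : ∀ x ∈ S, ‖x‖ ≤ 1) (hva : -va ∈ S) (hvb : -vb ∈ S)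
    (hEa : ∀ r : ℝ, 0 < r → ∀ x, r • x ∈ Ea ↔ x ∈ Ea)
    (hEb : ∀ r : ℝ, 0 < r → ∀ x, r • x ∈ Eb ↔ x ∈ Eb)
    (hG : Gadget Ea Eb (va - vb))
    (h1 : ∀ (c : Plane) (δ : ℝ), 0 < δ → Config S Ea Eb va vb k (l + 1) c δ)
    (h2 : ∀ (c : Plane) (δ : ℝ), 0 < δ → Config S Ea Eb va vb (k + 1) l c δ)
    (c : Plane) (δ : ℝ) (hδ : 0 < δ) : Config S Ea Eb va vb (k + 1) (l + 1) c δ := by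
  obtain ⟨D, z, ε₀, ρ, hε₀, hρ, hgad⟩ := hG
  -- `r` is the scale at which the gadget is placed, `τ` the radius of the two clusters
  obtain ⟨r, hr, hr1, hr2⟩ : ∃ r : ℝ, 0 < r ∧ r * (2 * ε₀ + ‖z‖) ≤ δ ∧ r * ‖D‖ ≤ δ / 2 := by
    have hM : 0 < 2 * ε₀ + ‖z‖ + ‖D‖ := by positivity
    refine ⟨δ / (2 * (2 * ε₀ + ‖z‖ + ‖D‖)), by positivity, ?_, ?_⟩
    · rw [div_mul_eq_mul_div, div_le_iff₀ (by positivity)]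
      gcongr
      nlinarith [norm_nonneg D, norm_nonneg z]
    · rw [div_mul_eq_mul_div, div_le_iff₀ (by positivity)]
      nlinarith [norm_nonneg D, norm_nonneg z]
  obtain ⟨τ, hτ, hτ1, hτ2⟩ : ∃ τ : ℝ, 0 < τ ∧ τ ≤ δ / 2 ∧ 2 * τ ≤ r * ρ := by
    refine ⟨min (δ / 2) (r * ρ / 2), by positivity, min_le_left _ _, ?_⟩
    linarith [min_le_right (δ / 2) (r * ρ / 2)]
  have scale : ∀ w₀ w : Plane, ‖w - r • w₀‖ ≤ 2 * τ → ∃ y : Plane, ‖y‖ ≤ ρ ∧ w = r • (w₀ + y) := by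
    intro w₀ w h
    refine ⟨r⁻¹ • (w - r • w₀), ?_, ?_⟩
    · rw [norm_smul, norm_inv, Real.norm_of_nonneg hr.le, inv_mul_le_iff₀ hr]
      linarith
    · rw [smul_add, smul_inv_smul₀ hr.ne']; abel
  obtain ⟨ι₁, ι₂, ι₃, _, _, _, ε, p, qa, qb, hε, hX, hqa, hqb, hka, hkb, hcol⟩ := h1 c τ hτ
  obtain ⟨κ₁, κ₂, κ₃, _, _, _, ε', p', qa', qb', hε', hX', hqa', hqb', hka', hkb', hcol'⟩ :=
    h2 (c + r • D) τ hτ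
  have vert : ∀ (w : Plane) (_ : -w ∈ S) (s : ℝ) (q : Plane), q - s • w ∈ homCopy s q S :=
    fun w hw s q => ⟨-w, hw, by simp only [smul_neg]; abel⟩
  simp only [Metric.mem_closedBall, dist_eq_norm] at hqa hqb hqa' hqb'
  have hxa : ∀ i, ‖p i - ε i • va - c‖ ≤ τ := fun i => by
    simpa [dist_eq_norm] using hX i (vert va hva (ε i) (p i))
  have hxb : ∀ i, ‖p i - ε i • vb - c‖ ≤ τ := fun i => by
    simpa [dist_eq_norm] using hX i (vert vb hvb (ε i) (p i))
  have hxa' : ∀ i, ‖p' i - ε' i • va - (c + r • D)‖ ≤ τ := fun i => by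
    simpa [dist_eq_norm] using hX' i (vert va hva (ε' i) (p' i))
  have hxb' : ∀ i, ‖p' i - ε' i • vb - (c + r • D)‖ ≤ τ := fun i => by
    simpa [dist_eq_norm] using hX' i (vert vb hvb (ε' i) (p' i))
  -- a vertex in one cluster minus an apex in the other one
  have cross : ∀ x q : Plane, ‖x - c‖ ≤ τ → ‖q - (c + r • D)‖ ≤ τ →
      (x - q ∉ Ea ∧ x - q ∉ Eb) ∧ (q - x ∉ Ea ∧ q - x ∉ Eb) := by
    intro x q hx hq
    constructor
    · obtain ⟨y, hy, e⟩ := scale (-D) (x - q) (by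
        have : x - q - r • -D = (x - c) - (q - (c + r • D)) := by module
        rw [this]; linarith [norm_sub_le (x - c) (q - (c + r • D))])
      rw [e, hEa r hr, hEb r hr]
      exact ⟨(hgad y hy).1.2.1, (hgad y hy).1.2.2.2⟩
    · obtain ⟨y, hy, e⟩ := scale D (q - x) (by
        have : q - x - r • D = (q - (c + r • D)) - (x - c) := by module
        rw [this]; linarith [norm_sub_le (q - (c + r • D)) (x - c)])
      rw [e, hEa r hr, hEb r hr]
      exact ⟨(hgad y hy).1.1, (hgad y hy).1.2.2.1⟩
  obtain ⟨P, hP⟩ : ∃ P, P = c + r • z + (r * ε₀) • vb := ⟨_, rfl⟩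
  have new1 : ∀ q : Plane, ‖q - c‖ ≤ τ →
      P - (r * ε₀) • va - q ∈ Ea ∧ P - (r * ε₀) • vb - q ∉ Eb := by
    intro q hq
    constructor
    · obtain ⟨y, hy, e⟩ := scale (z - ε₀ • (va - vb)) (P - (r * ε₀) • va - q) (by
        have : P - (r * ε₀) • va - q - r • (z - ε₀ • (va - vb)) = -(q - c) := by
          rw [hP]; module
        rw [this, norm_neg]; linarith)
      rw [e, hEa r hr]
      exact (hgad y hy).2.1
    · obtain ⟨y, hy, e⟩ := scale z (P - (r * ε₀) • vb - q) (by
        have : P - (r * ε₀) • vb - q - r • z = -(q - c) := by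
          rw [hP]; module
        rw [this, norm_neg]; linarith)
      rw [e, hEb r hr]
      exact (hgad y hy).2.2.1
  have new2 : ∀ q : Plane, ‖q - (c + r • D)‖ ≤ τ →
      P - (r * ε₀) • va - q ∉ Ea ∧ P - (r * ε₀) • vb - q ∈ Eb := by
    intro q hq
    constructor
    · obtain ⟨y, hy, e⟩ := scale (z - ε₀ • (va - vb) - D) (P - (r * ε₀) • va - q) (by
        have : P - (r * ε₀) • va - q - r • (z - ε₀ • (va - vb) - D) = -(q - (c + r • D)) := by
          rw [hP]; module
        rw [this, norm_neg]; linarith)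
      rw [e, hEa r hr]
      exact (hgad y hy).2.2.2.1
    · obtain ⟨y, hy, e⟩ := scale (z - D) (P - (r * ε₀) • vb - q) (by
        have : P - (r * ε₀) • vb - q - r • (z - D) = -(q - (c + r • D)) := by
          rw [hP]; module
        rw [this, norm_neg]; linarith)
      rw [e, hEb r hr]
      exact (hgad y hy).2.2.2.2
  have ball1 : Metric.closedBall c τ ⊆ Metric.closedBall c δ :=
    Metric.closedBall_subset_closedBall (by linarith)
  have ball2 : Metric.closedBall (c + r • D) τ ⊆ Metric.closedBall c δ := by
    apply Metric.closedBall_subset_closedBall'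
    rw [dist_eq_norm, add_sub_cancel_left, norm_smul, Real.norm_of_nonneg hr.le]
    linarith
  refine ⟨Option (ι₁ ⊕ κ₁), ι₂ ⊕ κ₂, ι₃ ⊕ κ₃, inferInstance, inferInstance, inferInstance,
    fun i => i.elim (r * ε₀) (Sum.elim ε ε'), fun i => i.elim P (Sum.elim p p'),
    Sum.elim qa qa', Sum.elim qb qb', ?_, ?_, ?_, ?_, ?_, ?_, ?_⟩
  · rintro (_ | i | i)
    · exact mul_pos hr hε₀
    · exact hε i
    · exact hε' i
  · rintro (_ | i | i)
    · rintro _ ⟨x, hx, rfl⟩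
      have h1 := hS x hx
      have h2 := hS _ hvb
      rw [norm_neg] at h2
      simp only [Option.elim_none, Metric.mem_closedBall, dist_eq_norm]
      have : (r * ε₀) • x + P - c = r • (ε₀ • x + z + ε₀ • vb) := by rw [hP]; module
      rw [this, norm_smul, Real.norm_of_nonneg hr.le]
      refine le_trans (mul_le_mul_of_nonneg_left ?_ hr.le) hr1
      have h3 := norm_add₃_le (a := ε₀ • x) (b := z) (c := ε₀ • vb)
      rw [norm_smul, norm_smul, Real.norm_of_nonneg hε₀.le] at h3
      nlinarith
    · exact (hX i).trans ball1
    · exact (hX' i).trans ball2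
  · rintro (j | j)
    · exact ball1 (by simpa [dist_eq_norm] using hqa j)
    · exact ball2 (by simpa [dist_eq_norm] using hqa' j)
  · rintro (j | j)
    · exact ball1 (by simpa [dist_eq_norm] using hqb j)
    · exact ball2 (by simpa [dist_eq_norm] using hqb' j)
  · rintro (j | j)
    · rw [ncard_option_inl]
      · exact congrArg (· + 1) (hka j)
      · exact (new1 _ (hqa j)).1
      · exact fun i => (cross _ _ (hqa j) (hxa' i)).2.1
    · rw [ncard_option_inr']
      · exact hka' j
      · exact (new2 _ (hqa' j)).1
      · exact fun i => (cross _ _ (hxa i) (hqa' j)).1.1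
  · rintro (j | j)
    · rw [ncard_option_inl']
      · exact hkb j
      · exact (new1 _ (hqb j)).2
      · exact fun i => (cross _ _ (hqb j) (hxb' i)).2.2
    · rw [ncard_option_inr]
      · exact congrArg (· + 1) (hkb' j)
      · exact (new2 _ (hqb' j)).2
      · exact fun i => (cross _ _ (hxb i) (hqb' j)).1.2
  · intro red
    cases hred : red none
    · rcases hcol' (fun i => red (some (.inr i))) with ⟨j, hj⟩ | ⟨j, hj⟩
      · refine Or.inl ⟨.inr j, ?_⟩
        rintro (_ | i | i) hi
        · exact absurd hi (new2 _ (hqa' j)).1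
        · exact absurd hi (cross _ _ (hxa i) (hqa' j)).1.1
        · exact hj i hi
      · refine Or.inr ⟨.inr j, ?_⟩
        rintro (_ | i | i) hi
        · exact hred
        · exact absurd hi (cross _ _ (hxb i) (hqb' j)).1.2
        · exact hj i hi
    · rcases hcol (fun i => red (some (.inl i))) with ⟨j, hj⟩ | ⟨j, hj⟩
      · refine Or.inl ⟨.inl j, ?_⟩
        rintro (_ | i | i) hi
        · exact hred
        · exact hj i hi
        · exact absurd hi (cross _ _ (hqa j) (hxa' i)).2.1
      · refine Or.inr ⟨.inl j, ?_⟩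
        rintro (_ | i | i) hi
        · exact absurd hi (new1 _ (hqb j)).2
        · exact hj i hi
        · exact absurd hi (cross _ _ (hqb j) (hxb' i)).2.2

lemma config_exists {S Ea Eb : Set Plane} {va vb : Plane}
    (hS : ∀ x ∈ S, ‖x‖ ≤ 1) (hva : -va ∈ S) (hvb : -vb ∈ S)
    (hEa : ∀ r : ℝ, 0 < r → ∀ x, r • x ∈ Ea ↔ x ∈ Ea)
    (hEb : ∀ r : ℝ, 0 < r → ∀ x, r • x ∈ Eb ↔ x ∈ Eb)
    (hG : Gadget Ea Eb (va - vb)) (k l : ℕ) :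
    ∀ (c : Plane) (δ : ℝ), 0 < δ → Config S Ea Eb va vb k l c δ := by
  induction k generalizing l with
  | zero => exact fun c δ hδ => config_zero_left _ _ _ _ _ _ _ hδ
  | succ k ihk =>
    induction l with
    | zero => exact fun c δ hδ => config_zero_right _ _ _ _ _ _ _ hδ
    | succ l ihl => exact config_step hS hva hvb hEa hEb hG (ihk (l + 1)) ihl

/-! ### Intersection of homothets with wedges -/

lemma wedge_smul_mem_iff {w₁ w₂ : Plane} (r : ℝ) (hr : 0 < r) (x : Plane) :
    r • x ∈ wedge w₁ w₂ ↔ x ∈ wedge w₁ w₂ := by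
  have key : ∀ r : ℝ, 0 < r → ∀ x, x ∈ wedge w₁ w₂ → r • x ∈ wedge w₁ w₂ := by
    rintro r hr _ ⟨lam, mu, h1, h2, rfl⟩
    exact ⟨r * lam, r * mu, by positivity, by positivity, by module⟩
  refine ⟨fun h => ?_, key r hr x⟩
  have := key r⁻¹ (inv_pos.2 hr) _ h
  rwa [inv_smul_smul₀ hr.ne'] at this

/-- A homothet of `S` meets a translate of the wedge of `-S` at `m` exactly when its vertex
corresponding to `m` lies in the translate. -/
lemma inter_wedge_iff {S : Set Plane} {m w₁ w₂ : Plane} (hm : -m ∈ S)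
    (hsub : ∀ z ∈ negSet S, z - m ∈ wedge w₁ w₂) {ε : ℝ} (hε : 0 < ε) (p q : Plane) :
    (homCopy ε p S ∩ (fun x => x + q) '' wedge w₁ w₂).Nonempty ↔
      p - ε • m - q ∈ wedge w₁ w₂ := by
  constructor
  · rintro ⟨_, ⟨x, hx, rfl⟩, ⟨y, ⟨lam, mu, h1, h2, rfl⟩, hxy⟩⟩
    obtain ⟨lam', mu', h1', h2', h⟩ := hsub (-x) ⟨x, hx, rfl⟩
    refine ⟨lam + ε * lam', mu + ε * mu', by positivity, by positivity, ?_⟩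
    have e1 : p - ε • m - q = (lam • w₁ + mu • w₂) + ε • (-x - m) := by
      have : p = (lam • w₁ + mu • w₂ + q) - ε • x := by
        rw [eq_sub_iff_add_eq, add_comm]; exact hxy.symm
      rw [this]; module
    rw [e1, h]; module
  · intro h
    refine ⟨p - ε • m, ⟨-m, hm, ?_⟩, ⟨_, h, ?_⟩⟩
    · simp only [smul_neg]; abel
    · simp only [sub_add_cancel]

lemma fin_add_one_ne {n : ℕ} [NeZero n] (hn : 4 ≤ n) (a : Fin n) : a + 1 ≠ a := by
  intro h
  have := add_eq_left.1 h
  rw [Fin.ext_iff, Fin.val_one'] at this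
  simp at this
  omega

lemma fin_sub_one_ne_add_one {n : ℕ} [NeZero n] (hn : 4 ≤ n) (a : Fin n) : a - 1 ≠ a + 1 := by
  intro h
  have := sub_eq_iff_eq_add.1 h
  rw [add_assoc, left_eq_add, Fin.ext_iff, Fin.val_add, Fin.val_one',
    Nat.mod_eq_of_lt (by omega : 1 < n), Nat.mod_eq_of_lt (by omega)] at this
  simp at this

theorem statement6 (P : Finset Plane) (hcard : 4 ≤ P.card)
    (hpos : StrictlyConvexPosition P)
    (S : Set Plane) (hS : S = convexHull ℝ (P : Set Plane))
    (hunit : S ⊆ Metric.closedBall (0 : Plane) 1) (h0 : (0 : Plane) ∈ S)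
    -- the vertices of −S, listed in cyclic order around the boundary:
    (n : ℕ) [NeZero n] (hn : n = P.card) (v : Fin n → Plane)
    (hvinj : Function.Injective v)
    (hvrange : Set.range v = {x : Plane | -x ∈ P})
    (hvconsec : ∀ i : Fin n, segment ℝ (v i) (v (i + 1)) ⊆ frontier (negSet S))
    -- two non-adjacent vertices v a and v b:
    (a b : Fin n) (hab : a ≠ b)
    (hnotadj : ¬ segment ℝ (v a) (v b) ⊆ frontier (negSet S))
    -- a direction d, not parallel to any side of S, such that the two
    -- supporting lines of −S parallel to d touch −S exactly at v a and v b
    -- (u is a normal vector of these supporting lines):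
    (d : Plane) (hd : d ≠ 0)
    (hdside : ∀ i : Fin n, ∀ c : ℝ, v (i + 1) - v i ≠ c • d)
    (u : Plane) (hu : u ≠ 0) (hud : ⟪u, d⟫ = 0)
    (hmax : ∀ x ∈ negSet S, x ≠ v a → ⟪u, x⟫ < ⟪u, v a⟫)
    (hmin : ∀ x ∈ negSet S, x ≠ v b → ⟪u, v b⟫ < ⟪u, x⟫)
    (k l : ℕ) (hk : 1 ≤ k) (hl : 1 ≤ l) (δ : ℝ) (hδ : 0 < δ) :
    ∃ (ι₁ ι₂ ι₃ : Type) (_ : Fintype ι₁) (_ : Fintype ι₂) (_ : Fintype ι₃)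
      (ε : ι₁ → ℝ) (p : ι₁ → Plane) (qa : ι₂ → Plane) (qb : ι₃ → Plane)
      (X : ι₁ → Set Plane) (A : ι₂ → Set Plane) (B : ι₃ → Set Plane)
      (center : Plane),
      -- X is a family of positive homothetic copies of S:
      (∀ i, 0 < ε i) ∧ (∀ i, X i = homCopy (ε i) (p i) S) ∧
      -- A and B are families of translates of the wedges E^a and E^b:
      (∀ j, A j = (fun x => x + qa j) '' wedge (v (a - 1) - v a) (v (a + 1) - v a)) ∧
      (∀ j, B j = (fun x => x + qb j) '' wedge (v (b - 1) - v b) (v (b + 1) - v b)) ∧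
      -- all members of X and all apices of the wedges lie in one disc of radius δ:
      (∀ i, X i ⊆ Metric.closedBall center δ) ∧
      (∀ j, qa j ∈ Metric.closedBall center δ) ∧
      (∀ j, qb j ∈ Metric.closedBall center δ) ∧
      -- (i) every member of A meets exactly k members of X, and every member
      -- of B meets exactly l members of X:
      (∀ j, Nat.card {i : ι₁ | (X i ∩ A j).Nonempty} = k) ∧
      (∀ j, Nat.card {i : ι₁ | (X i ∩ B j).Nonempty} = l) ∧
      -- (ii) for every red/blue 2-coloring of X, some member of A meets only
      -- red members of X, or some member of B meets only blue members of X: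
      (∀ red : ι₁ → Bool,
        (∃ j, ∀ i, (X i ∩ A j).Nonempty → red i = true) ∨
        (∃ j, ∀ i, (X i ∩ B j).Nonempty → red i = false)) := by
  have hn4 : 4 ≤ n := hn ▸ hcard
  have hvP : ∀ i, -v i ∈ P := fun i => by
    have : v i ∈ Set.range v := ⟨i, rfl⟩
    rwa [hvrange] at this
  have hvS : ∀ i, -v i ∈ S := fun i => hS ▸ subset_convexHull ℝ _ (hvP i)
  have hvC : ∀ i, v i ∈ negSet S := fun i => ⟨-v i, hvS i, by simp⟩
  have hC : Convex ℝ (negSet S) := by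
    have h : Convex ℝ S := hS ▸ convex_convexHull ℝ _
    have : negSet S = -S := by rw [negSet, ← Set.image_neg_eq_neg]
    rw [this]
    exact h.neg
  have hext : ∀ i, v i ∈ Set.extremePoints ℝ (negSet S) := by
    intro i
    rw [mem_extremePoints]
    refine ⟨hvC i, ?_⟩
    rintro _ ⟨x, hx, rfl⟩ _ ⟨y, hy, rfl⟩ ⟨s, t, hs, ht, hst, h⟩
    have hp := hpos _ (hvP i)
    rw [← hS, mem_extremePoints] at hp
    obtain ⟨e1, e2⟩ := hp.2 x hx y hy ⟨s, t, hs, ht, hst, by rw [← h]; module⟩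
    exact ⟨by simp [e1], by simp [e2]⟩
  have hwedge : ∀ i : Fin n, _ := fun i =>
    wedge_of_neighbours hC (hext i) (hext (i - 1)) (hext (i + 1))
      (fun h => fin_add_one_ne hn4 (i - 1) (by rw [sub_add_cancel]; exact (hvinj h).symm))
      (fun h => fin_add_one_ne hn4 i (hvinj h))
      (fun h => fin_sub_one_ne_add_one hn4 i (hvinj h))
      (by
        rw [segment_symm]
        have := hvconsec (i - 1)
        rwa [sub_add_cancel] at this)
      (hvconsec i)
  have hne1 : ∀ i : Fin n, v (i + 1) ≠ v i := fun i h => fin_add_one_ne hn4 i (hvinj h)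
  have hne2 : ∀ i : Fin n, v (i - 1) ≠ v i := fun i h => by
    have := hne1 (i - 1)
    rw [sub_add_cancel] at this
    exact this h.symm
  obtain ⟨La₁, La₂, -, hwa, hsuba, hinta⟩ := hwedge a
  obtain ⟨Lb₁, Lb₂, -, hwb, hsubb, hintb⟩ := hwedge b
  have hia := hinta (v b) (hvC b) hnotadj
  have hib := hintb (v a) (hvC a) (by rwa [segment_symm])
  have hue : 0 < ⟪u, v a - v b⟫ := by
    rw [inner_sub_right]
    linarith [hmin (v a) (hvC a) fun h => hab (hvinj h)]
  have hli : LinearIndependent ℝ ![d, v a - v b] := by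
    rw [LinearIndependent.pair_iff' hd]
    intro t ht
    rw [← ht, inner_smul_right, hud] at hue
    simp at hue
  obtain ⟨f, hf, hf0, hfpos, hfb⟩ := wedge_epigraph (u := u) Lb₁ Lb₂ hwb hib.1 hib.2 hd hud
    (by rw [inner_sub_right]; linarith [hmin _ (hvC (b - 1)) (hne2 b)])
    (by rw [inner_sub_right]; linarith [hmin _ (hvC (b + 1)) (hne1 b)])
  rw [← neg_sub] at hia
  obtain ⟨g, hg, -, hgpos, hga⟩ := wedge_epigraph (u := -u) La₁ La₂ hwa hia.1 hia.2 hd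
    (by rw [inner_neg_left, hud, neg_zero])
    (by rw [inner_neg_left, inner_sub_right]; linarith [hmax _ (hvC (a - 1)) (hne2 a)])
    (by rw [inner_neg_left, inner_sub_right]; linarith [hmax _ (hvC (a + 1)) (hne1 a)])
  have hG := exists_gadget hli hf hg hf0 hfpos hgpos hga hfb
  obtain ⟨ι₁, ι₂, ι₃, i₁, i₂, i₃, ε, p, qa, qb, hε, hX, hqa, hqb, hka, hkb, hcol⟩ :=
    config_exists (fun x hx => by simpa using hunit hx) (hvS a) (hvS b)
      (fun r hr x => wedge_smul_mem_iff r hr x) (fun r hr x => wedge_smul_mem_iff r hr x)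
      hG k l 0 δ hδ
  refine ⟨ι₁, ι₂, ι₃, i₁, i₂, i₃, ε, p, qa, qb, _, _, _, 0, hε, fun _ => rfl, fun _ => rfl,
    fun _ => rfl, hX, hqa, hqb, ?_, ?_, ?_⟩
  · intro j
    simp only [inter_wedge_iff (hvS a) hsuba (hε _)]
    exact hka j
  · intro j
    simp only [inter_wedge_iff (hvS b) hsubb (hε _)]
    exact hkb j
  · intro red
    simp only [inter_wedge_iff (hvS a) hsuba (hε _), inter_wedge_iff (hvS b) hsubb (hε _)]
    exact hcol red
end
end

section
/- Let S be a convex polygon with at least four sides, with 0 ∈ S. Then for every integer m ≥ 1 and every ε > 0 there exist a finite indexed family X' = (ε_i·S + p_i)_{i∈I} of positive homothetic copies of S with scaling factors 1 < ε_i < 1 + ε, and a finite set Y' of points of ℝ², such that every point of Y' belongs to exactly m members of X', and for every 2-coloring of the members of X' by red and blue there is a point y ∈ Y' such that all m members of X' containing y have the same color. In particular, X' is an m-fold covering of the set Y' that cannot be split into two subfamilies each covering Y'. -/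
/-!
**Idea of the proof.** A homothet `(1 + s)·S + t` has three degrees of freedom, and near the image
of a vertex of `S` it looks like a wedge bounded by two sides. Take two non-adjacent vertices `a`
and `c`. The four sides meeting there are distinct, their normals and support numbers satisfy a
single linear relation, and in the cyclic order of the sides its signs alternate. After
normalization the displacements `u₀, u₁` of the sides at `a` and `u₂, u₃` of the sides at `c`
satisfy `u₀ + u₂ = u₁ + u₃`, and are otherwise arbitrary (`exists_two_wedges`). A point near `a`
lies in exactly those copies whose `(u₀, u₁)` is in a quadrant, a point near `c` in those whose
`(u₂, u₃)` is in a quadrant (`IsWedge.mem_homCopy`).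

It remains to find finitely many points of the hyperplane `u₀ + u₂ = u₁ + u₃`, and quadrants in the
two coordinate pairs containing exactly `k`, respectively `l`, of them, such that in each 2-coloring
a quadrant of the first kind is entirely red or one of the second kind is entirely blue. This is a
recursion on `k` and `l` (`unsplittable`): a configuration for `(k, l + 1)`, a far translate of one
for `(k + 1, l)`, and one new point, which increases the quadrants of the first kind in the first
configuration and those of the second kind in the second one, together form a configuration for
`(k + 1, l + 1)`. The case `k = l = m`, shrunk so that all scaling factors are close to
`1 + ε / 2`, proves the theorem.
-/

/-!
STATEMENT 8: Let S be a convex polygon with at least four sides, with 0 ∈ S.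
Then for every m ≥ 1 and ε > 0 there are a finite family X' of positive
homothetic copies of S with scaling factors strictly between 1 and 1 + ε, and
a finite set Y' of points, such that every point of Y' lies in exactly m
members of X', and for every red/blue coloring of X' there is a point of Y'
such that all m members of X' containing it get the same color. In
particular, X' is an m-fold covering of Y' that cannot be split into two
subfamilies each covering Y'.
-/

noncomputable section

/-! ### The two-parameter unsplittable configurations -/

/-- A finite set of points `u i = (u₀, u₁, u₂, u₃)` on the hyperplane `u₀ + u₂ = u₁ + u₃`, with two
families of quadrants: those with corner in `Rs` live in the coordinates `(u₀, u₁)` and contain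
exactly `k` points each, those with corner in `Bs` live in the coordinates `(u₂, u₃)` and contain
exactly `l` points each.  In every 2-coloring some quadrant of the first family has only points of
color `true`, or some quadrant of the second family has only points of color `false`.
The number `M` bounds all the coordinates involved. -/
def Unsplittable (k l : ℕ) : Prop :=
  ∃ (I : Type) (_ : Fintype I) (u : I → Fin 4 → ℝ) (Rs Bs : Finset (ℝ × ℝ)) (M : ℝ),
    (∀ i, u i 0 + u i 2 = u i 1 + u i 3) ∧
    (∀ i j, |u i j| ≤ M) ∧
    (∀ r ∈ Rs, |r.1| ≤ M ∧ |r.2| ≤ M) ∧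
    (∀ r ∈ Bs, |r.1| ≤ M ∧ |r.2| ≤ M) ∧
    (∀ r ∈ Rs, ∃ E : Finset I, E.card = k ∧ ∀ i, i ∈ E ↔ r.1 ≤ u i 0 ∧ r.2 ≤ u i 1) ∧
    (∀ r ∈ Bs, ∃ E : Finset I, E.card = l ∧ ∀ i, i ∈ E ↔ r.1 ≤ u i 2 ∧ r.2 ≤ u i 3) ∧
    (∀ col : I → Bool,
      (∃ r ∈ Rs, ∀ i, r.1 ≤ u i 0 → r.2 ≤ u i 1 → col i = true) ∨
      (∃ r ∈ Bs, ∀ i, r.1 ≤ u i 2 → r.2 ≤ u i 3 → col i = false))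

lemma unsplittable_zero_left (l : ℕ) : Unsplittable 0 l := by
  refine ⟨Empty, inferInstance, fun i => i.elim, {(0, 0)}, ∅, 0, ?_, ?_, ?_, ?_, ?_, ?_, ?_⟩
  all_goals simp

lemma unsplittable_zero_right (k : ℕ) : Unsplittable k 0 := by
  refine ⟨Empty, inferInstance, fun i => i.elim, ∅, {(0, 0)}, 0, ?_, ?_, ?_, ?_, ?_, ?_, ?_⟩
  all_goals simp

/-- The recursive step.  The first configuration stays near the origin, the second one is moved
to `K • (11, -1, -11, 1)`, and a new point `K • (10, 1, -1, 8)` is added.  With `K` large compared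
to the diameters, the new point lies in every `(u₀, u₁)`-quadrant of the first configuration and
in every `(u₂, u₃)`-quadrant of the second one, and there are no other new incidences. Whatever the
color of the new point, one of the two configurations provides a monochromatic quadrant. -/
lemma unsplittable_step {k l : ℕ} (hA : Unsplittable k (l + 1)) (hB : Unsplittable (k + 1) l) :
    Unsplittable (k + 1) (l + 1) := by
  classical
  obtain ⟨A, _, uA, RA, BA, MA, hrelA, huA, hRA, hBA, hERA, hEBA, hcA⟩ := hA
  obtain ⟨B, _, uB, RB, BB, MB, hrelB, huB, hRB, hBB, hERB, hEBB, hcB⟩ := hB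
  obtain ⟨N, hN0, hNA, hNB⟩ : ∃ N : ℝ, 0 < N ∧ MA ≤ N ∧ MB ≤ N :=
    ⟨max 1 (max MA MB), by positivity, by simp, by simp⟩
  obtain ⟨K, hK⟩ : ∃ K : ℝ, K = 3 * N := ⟨_, rfl⟩
  have huA' : ∀ i j, -N ≤ uA i j ∧ uA i j ≤ N := fun i j => abs_le.1 ((huA i j).trans hNA)
  have huB' : ∀ i j, -N ≤ uB i j ∧ uB i j ≤ N := fun i j => abs_le.1 ((huB i j).trans hNB)
  have hRA' : ∀ r ∈ RA, (-N ≤ r.1 ∧ r.1 ≤ N) ∧ (-N ≤ r.2 ∧ r.2 ≤ N) := fun r hr =>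
    ⟨abs_le.1 ((hRA r hr).1.trans hNA), abs_le.1 ((hRA r hr).2.trans hNA)⟩
  have hBA' : ∀ r ∈ BA, (-N ≤ r.1 ∧ r.1 ≤ N) ∧ (-N ≤ r.2 ∧ r.2 ≤ N) := fun r hr =>
    ⟨abs_le.1 ((hBA r hr).1.trans hNA), abs_le.1 ((hBA r hr).2.trans hNA)⟩
  have hRB' : ∀ r ∈ RB, (-N ≤ r.1 ∧ r.1 ≤ N) ∧ (-N ≤ r.2 ∧ r.2 ≤ N) := fun r hr =>
    ⟨abs_le.1 ((hRB r hr).1.trans hNB), abs_le.1 ((hRB r hr).2.trans hNB)⟩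
  have hBB' : ∀ r ∈ BB, (-N ≤ r.1 ∧ r.1 ≤ N) ∧ (-N ≤ r.2 ∧ r.2 ≤ N) := fun r hr =>
    ⟨abs_le.1 ((hBB r hr).1.trans hNB), abs_le.1 ((hBB r hr).2.trans hNB)⟩
  let u : Option (A ⊕ B) → Fin 4 → ℝ := fun i => match i with
    | none => ![10 * K, K, -K, 8 * K]
    | some (Sum.inl x) => uA x
    | some (Sum.inr x) => ![uB x 0 + 11 * K, uB x 1 - K, uB x 2 - 11 * K, uB x 3 + K]
  let R : Finset (ℝ × ℝ) := RA ∪ RB.image (fun r => (r.1 + 11 * K, r.2 - K))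
  let T : Finset (ℝ × ℝ) := BA ∪ BB.image (fun r => (r.1 - 11 * K, r.2 + K))
  refine ⟨Option (A ⊕ B), inferInstance, u, R, T, 12 * K, ?_, ?_, ?_, ?_, ?_, ?_, ?_⟩
  · rintro (_ | x | x)
    · simp [u]; ring
    · exact hrelA x
    · simp [u]; linarith [hrelB x]
  · rintro (_ | x | x) j
    · have hK0 : |K| = K := abs_of_pos (by linarith)
      fin_cases j <;> simp [u, abs_mul, hK0] <;> linarith
    · have := huA' x j
      simp only [u, abs_le]; constructor <;> linarith
    · have h0 := huB' x 0
      have h1 := huB' x 1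
      have h2 := huB' x 2
      have h3 := huB' x 3
      fin_cases j <;> simp [u, abs_le] <;> constructor <;> linarith
  · intro r hr
    rcases Finset.mem_union.1 hr with hr | hr
    · have := hRA' r hr
      simp only [abs_le]; refine ⟨⟨?_, ?_⟩, ?_, ?_⟩ <;> linarith
    · obtain ⟨q, hq, rfl⟩ := Finset.mem_image.1 hr
      have := hRB' q hq
      simp only [abs_le]; refine ⟨⟨?_, ?_⟩, ?_, ?_⟩ <;> linarith
  · intro r hr
    rcases Finset.mem_union.1 hr with hr | hr
    · have := hBA' r hr
      simp only [abs_le]; refine ⟨⟨?_, ?_⟩, ?_, ?_⟩ <;> linarith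
    · obtain ⟨q, hq, rfl⟩ := Finset.mem_image.1 hr
      have := hBB' q hq
      simp only [abs_le]; refine ⟨⟨?_, ?_⟩, ?_, ?_⟩ <;> linarith
  · intro r hr
    rcases Finset.mem_union.1 hr with hr | hr
    · obtain ⟨E, hE, hEm⟩ := hERA r hr
      refine ⟨Finset.insertNone (E.map Function.Embedding.inl), by simp [hE], ?_⟩
      have := hRA' r hr
      rintro (_ | x | x)
      · simp [u]; constructor <;> linarith
      · simp [u, hEm]
      · have h1 := huB' x 1
        simp [u]; intro; linarith
    · obtain ⟨q, hq, rfl⟩ := Finset.mem_image.1 hr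
      obtain ⟨E, hE, hEm⟩ := hERB q hq
      refine ⟨(E.map Function.Embedding.inr).map Function.Embedding.some, by simp [hE], ?_⟩
      have := hRB' q hq
      rintro (_ | x | x)
      · simp [u]; intro; linarith
      · have h1 := huA' x 0
        simp [u]; intro; linarith
      · simp [u, hEm]
  · intro r hr
    rcases Finset.mem_union.1 hr with hr | hr
    · obtain ⟨E, hE, hEm⟩ := hEBA r hr
      refine ⟨(E.map Function.Embedding.inl).map Function.Embedding.some, by simp [hE], ?_⟩
      have := hBA' r hr
      rintro (_ | x | x)
      · simp [u]; intro; linarith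
      · simp [u, hEm]
      · have h1 := huB' x 2
        simp [u]; intro; linarith
    · obtain ⟨q, hq, rfl⟩ := Finset.mem_image.1 hr
      obtain ⟨E, hE, hEm⟩ := hEBB q hq
      refine ⟨Finset.insertNone (E.map Function.Embedding.inr), by simp [hE], ?_⟩
      have := hBB' q hq
      rintro (_ | x | x)
      · simp [u]; constructor <;> linarith
      · have h1 := huA' x 3
        simp [u]; intro; linarith
      · simp [u, hEm]
  · intro col
    cases hc : col none with
    | true =>
      rcases hcA (fun x => col (some (Sum.inl x))) with ⟨r, hr, h⟩ | ⟨r, hr, h⟩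
      · refine Or.inl ⟨r, Finset.mem_union_left _ hr, ?_⟩
        have := hRA' r hr
        rintro (_ | x | x)
        · exact fun _ _ => hc
        · exact h x
        · have h1 := huB' x 1
          simp [u]; intros; linarith
      · refine Or.inr ⟨r, Finset.mem_union_left _ hr, ?_⟩
        have := hBA' r hr
        rintro (_ | x | x)
        · simp [u]; intros; linarith
        · exact h x
        · have h1 := huB' x 2
          simp [u]; intros; linarith
    | false =>
      rcases hcB (fun x => col (some (Sum.inr x))) with ⟨r, hr, h⟩ | ⟨r, hr, h⟩
      · refine Or.inl ⟨_, Finset.mem_union_right _ (Finset.mem_image_of_mem _ hr), ?_⟩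
        have := hRB' r hr
        rintro (_ | x | x)
        · simp [u]; intros; linarith
        · have h1 := huA' x 0
          simp [u]; intros; linarith
        · simpa [u] using h x
      · refine Or.inr ⟨_, Finset.mem_union_right _ (Finset.mem_image_of_mem _ hr), ?_⟩
        have := hBB' r hr
        rintro (_ | x | x)
        · exact fun _ _ => hc
        · have h1 := huA' x 3
          simp [u]; intros; linarith
        · simpa [u] using h x

theorem unsplittable (k l : ℕ) : Unsplittable k l := by
  induction k generalizing l with
  | zero => exact unsplittable_zero_left l
  | succ k ihk =>
    induction l with
    | zero => exact unsplittable_zero_right _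
    | succ l ihl => exact unsplittable_step (ihk _) ihl

/-! ### Wedges at the vertices of the polygon -/

/-- The determinant of two plane vectors. -/
def det2 (v w : Plane) : ℝ := v 0 * w 1 - v 1 * w 0

/-- At its vertex `a` the set `S` is locally the wedge `A₁ ≥ 0, A₂ ≥ 0`, where `A₁, A₂` are linear
coordinates centered at `a`: `S` lies in the wedge, and contains its part with `A₁, A₂ ≤ η`. -/
structure IsWedge (S : Set Plane) (a : Plane) (A₁ A₂ : Plane →ₗ[ℝ] ℝ) (η : ℝ) : Prop where
  sub : ∀ s ∈ S, 0 ≤ A₁ (s - a) ∧ 0 ≤ A₂ (s - a)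
  sup : ∀ v, 0 ≤ A₁ v → 0 ≤ A₂ v → A₁ v ≤ η → A₂ v ≤ η → a + v ∈ S
  surj : ∀ x y, ∃ v, A₁ v = x ∧ A₂ v = y

lemma IsWedge.mem_homCopy {S : Set Plane} {a : Plane} {A₁ A₂ : Plane →ₗ[ℝ] ℝ} {η : ℝ}
    (h : IsWedge S a A₁ A₂ η) {e : ℝ} (he : 1 < e) (p y : Plane)
    (h₁ : A₁ (y - (e • a + p)) ≤ η) (h₂ : A₂ (y - (e • a + p)) ≤ η) :
    y ∈ homCopy e p S ↔ 0 ≤ A₁ (y - (e • a + p)) ∧ 0 ≤ A₂ (y - (e • a + p)) := by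
  have he0 : 0 < e := by linarith
  constructor
  · rintro ⟨s, hs, rfl⟩
    have := h.sub s hs
    have h3 : e • s + p - (e • a + p) = e • (s - a) := by rw [smul_sub]; abel
    simp only [h3, map_smul, smul_eq_mul]
    exact ⟨mul_nonneg he0.le this.1, mul_nonneg he0.le this.2⟩
  · rintro ⟨h3, h4⟩
    set v := y - (e • a + p) with hv
    have hei : e⁻¹ ≤ 1 := inv_le_one_of_one_le₀ he.le
    have hei0 : 0 ≤ e⁻¹ := by positivity
    refine ⟨a + e⁻¹ • v, h.sup _ ?_ ?_ ?_ ?_, ?_⟩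
    · simp only [map_smul, smul_eq_mul]; positivity
    · simp only [map_smul, smul_eq_mul]; positivity
    · simp only [map_smul, smul_eq_mul]; nlinarith
    · simp only [map_smul, smul_eq_mul]; nlinarith
    · simp only [smul_add, smul_inv_smul₀ he0.ne', hv]; abel

/-- `det2` with the first argument fixed, as a linear map. -/
def detL (v : Plane) : Plane →ₗ[ℝ] ℝ where
  toFun w := det2 v w
  map_add' x y := by simp [det2]; ring
  map_smul' x y := by simp [det2]; ring

@[simp] lemma detL_apply (v w : Plane) : detL v w = det2 v w := rfl

lemma det2_swap (v w : Plane) : det2 v w = - det2 w v := by simp [det2]; ring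

/-- Every vertex `a` has two neighbors `b` and `d`, such that the other vertices lie in the open
wedge spanned at `a` by `b` and `d` (counterclockwise from `b` to `d`). -/
lemma exists_neighbors (P : Finset Plane) (hcard : 4 ≤ P.card) (hpos : StrictlyConvexPosition P)
    (a : Plane) (ha : a ∈ P) :
    ∃ b ∈ P, ∃ d ∈ P, 0 < det2 (b - a) (d - a) ∧
      (∀ r ∈ P, 0 ≤ det2 (b - a) (r - a) ∧ 0 ≤ det2 (r - a) (d - a)) ∧
      (∀ r ∈ P, r ≠ a → r ≠ b → 0 < det2 (b - a) (r - a)) ∧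
      (∀ r ∈ P, r ≠ a → r ≠ d → 0 < det2 (r - a) (d - a)) := by
  classical
  -- a linear functional that is strictly minimal at `a` on `P`
  obtain ⟨f, hf⟩ : ∃ f : Plane →L[ℝ] ℝ, ∀ r ∈ P, r ≠ a → 0 < f (r - a) := by
    have h1 : a ∉ convexHull ℝ ((P.erase a : Finset Plane) : Set Plane) := by
      have h2 := ((convex_convexHull ℝ
        (P : Set Plane)).mem_extremePoints_iff_mem_sdiff_convexHull_sdiff).1
        (hpos a ha)
      refine fun h3 => h2.2 (convexHull_mono ?_ h3)
      intro x hx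
      simp only [Finset.coe_erase] at hx
      exact ⟨subset_convexHull ℝ _ hx.1, hx.2⟩
    obtain ⟨f, s, h2, h3⟩ := geometric_hahn_banach_point_closed
      (convex_convexHull ℝ ((P.erase a : Finset Plane) : Set Plane))
      ((P.erase a).finite_toSet.isClosed_convexHull ℝ) h1
    refine ⟨f, fun r hr hra => ?_⟩
    have := h3 r (subset_convexHull ℝ _ (by simp [hr, hra]))
    rw [map_sub]; linarith
  obtain ⟨x, y, hxy⟩ : ∃ x y : ℝ, ∀ v : Plane, f v = x * v 0 + y * v 1 := by
    refine ⟨f (EuclideanSpace.single 0 1), f (EuclideanSpace.single 1 1), fun v => ?_⟩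
    have : v = v 0 • EuclideanSpace.single 0 1 + v 1 • EuclideanSpace.single (1 : Fin 2) (1 : ℝ) := by
      ext i; fin_cases i <;> simp
    conv_lhs => rw [this]
    simp only [map_add, map_smul, smul_eq_mul]; ring
  have hne : (P.erase a).Nonempty := by
    rw [← Finset.card_pos, Finset.card_erase_of_mem ha]; omega
  have hxy0 : 0 < x ^ 2 + y ^ 2 := by
    obtain ⟨r, hr⟩ := hne
    have h1 := hf r (Finset.mem_of_mem_erase hr) (Finset.ne_of_mem_erase hr)
    rw [hxy] at h1
    by_contra h2
    have hx : x = 0 := by nlinarith [sq_nonneg x, sq_nonneg y]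
    have hy : y = 0 := by nlinarith [sq_nonneg x, sq_nonneg y]
    simp [hx, hy] at h1
  -- the vertices other than `a` are ordered around `a` by the slope relative to `f`
  let g : Plane → ℝ := fun v => x * v 1 - y * v 0
  let q : Plane → ℝ := fun r => g (r - a) / f (r - a)
  have hdet : ∀ v w : Plane, (x ^ 2 + y ^ 2) * det2 v w = f v * g w - g v * f w := by
    intro v w; simp only [hxy, g, det2]; ring
  have hle : ∀ r ∈ P.erase a, ∀ t ∈ P.erase a, q r ≤ q t → 0 ≤ det2 (r - a) (t - a) := by
    intro r hr t ht h
    have h1 := hf r (Finset.mem_of_mem_erase hr) (Finset.ne_of_mem_erase hr)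
    have h2 := hf t (Finset.mem_of_mem_erase ht) (Finset.ne_of_mem_erase ht)
    have h3 := (div_le_div_iff₀ h1 h2).1 h
    have h4 := hdet (r - a) (t - a)
    by_contra h5
    push Not at h5
    nlinarith
  -- no three vertices are collinear
  have hcol : ∀ r ∈ P.erase a, ∀ t ∈ P.erase a, r ≠ t → det2 (r - a) (t - a) ≠ 0 := by
    have key : ∀ r ∈ P.erase a, ∀ t ∈ P.erase a, f (r - a) < f (t - a) →
        det2 (r - a) (t - a) ≠ 0 := by
      intro r hr t ht hlt h0
      have h1 := hf r (Finset.mem_of_mem_erase hr) (Finset.ne_of_mem_erase hr)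
      have h2 := hf t (Finset.mem_of_mem_erase ht) (Finset.ne_of_mem_erase ht)
      have h4 := hdet (r - a) (t - a)
      rw [h0, mul_zero] at h4
      have hseg : r ∈ openSegment ℝ a t := by
        refine ⟨1 - f (r - a) / f (t - a), f (r - a) / f (t - a), ?_, by positivity, by ring, ?_⟩
        · rw [sub_pos, div_lt_one h2]; exact hlt
        · have h5 : f (t - a) • (r - a) = f (r - a) • (t - a) := by
            have e0 : (x ^ 2 + y ^ 2) * (f (t - a) * (r - a) 0 - f (r - a) * (t - a) 0) = 0 := by
              simp only [hxy, det2] at h0 ⊢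
              linear_combination (x ^ 2 + y ^ 2) * y * h0
            have e1 : (x ^ 2 + y ^ 2) * (f (t - a) * (r - a) 1 - f (r - a) * (t - a) 1) = 0 := by
              simp only [hxy, det2] at h0 ⊢
              linear_combination -(x ^ 2 + y ^ 2) * x * h0
            have e0' := (mul_eq_zero.1 e0).resolve_left hxy0.ne'
            have e1' := (mul_eq_zero.1 e1).resolve_left hxy0.ne'
            ext i; fin_cases i
            · simpa using sub_eq_zero.1 e0'
            · simpa using sub_eq_zero.1 e1'
          have h6 : r - a = (f (r - a) / f (t - a)) • (t - a) := by
            rw [div_eq_inv_mul, mul_smul, ← h5, inv_smul_smul₀ h2.ne']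
          calc _ = a + (f (r - a) / f (t - a)) • (t - a) := by
                rw [sub_smul, one_smul, smul_sub]; abel
            _ = r := by rw [← h6]; abel
      have := (mem_extremePoints.1 (hpos r (Finset.mem_of_mem_erase hr))).2 a
        (subset_convexHull ℝ _ ha) t
        (subset_convexHull ℝ _ (Finset.mem_of_mem_erase ht)) hseg
      exact Finset.ne_of_mem_erase hr this.1.symm
    intro r hr t ht hrt h0
    rcases lt_trichotomy (f (r - a)) (f (t - a)) with h | h | h
    · exact key r hr t ht h h0
    · have h1 := hf r (Finset.mem_of_mem_erase hr) (Finset.ne_of_mem_erase hr)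
      have h7 : x * (r 0 - t 0) + y * (r 1 - t 1) = 0 := by
        rw [hxy, hxy] at h; simp at h; linarith
      have h8 : -y * (r 0 - t 0) + x * (r 1 - t 1) = 0 := by
        have h4 := hdet (r - a) (t - a)
        rw [h0, mul_zero, ← h, mul_comm, ← sub_mul] at h4
        have := (mul_eq_zero.1 h4.symm).resolve_right h1.ne'
        simp [g] at this; linarith
      apply hrt
      have e0 : (x ^ 2 + y ^ 2) * (r 0 - t 0) = 0 := by linear_combination x * h7 - y * h8
      have e1 : (x ^ 2 + y ^ 2) * (r 1 - t 1) = 0 := by linear_combination y * h7 + x * h8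
      have e0' := (mul_eq_zero.1 e0).resolve_left hxy0.ne'
      have e1' := (mul_eq_zero.1 e1).resolve_left hxy0.ne'
      ext i; fin_cases i
      · simpa using sub_eq_zero.1 e0'
      · simpa using sub_eq_zero.1 e1'
    · exact key t ht r hr h (by rw [det2_swap, h0, neg_zero])
  obtain ⟨b, hb, hbm⟩ := Finset.exists_min_image (P.erase a) q hne
  obtain ⟨d, hd, hdm⟩ := Finset.exists_max_image (P.erase a) q hne
  have hb1 : ∀ r ∈ P, r ≠ a → r ≠ b → 0 < det2 (b - a) (r - a) := by
    intro r hr hra hrb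
    have hr' : r ∈ P.erase a := Finset.mem_erase.2 ⟨hra, hr⟩
    exact lt_of_le_of_ne (hle b hb r hr' (hbm r hr')) (hcol b hb r hr' hrb.symm).symm
  have hd1 : ∀ r ∈ P, r ≠ a → r ≠ d → 0 < det2 (r - a) (d - a) := by
    intro r hr hra hrd
    have hr' : r ∈ P.erase a := Finset.mem_erase.2 ⟨hra, hr⟩
    exact lt_of_le_of_ne (hle r hr' d hd (hdm r hr')) (hcol r hr' d hd hrd).symm
  have hbd : d ≠ b := by
    rintro rfl
    obtain ⟨r, hr, hrn⟩ : ∃ r ∈ P, r ∉ ({a, d} : Finset Plane) := by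
      by_contra! h
      have := Finset.card_le_card (show P ⊆ {a, d} from h)
      have := Finset.card_le_two (a := a) (b := d)
      omega
    simp only [Finset.mem_insert, Finset.mem_singleton, not_or] at hrn
    have h1 := hb1 r hr hrn.1 hrn.2
    have h2 := hd1 r hr hrn.1 hrn.2
    rw [det2_swap] at h2; linarith
  refine ⟨b, Finset.mem_of_mem_erase hb, d, Finset.mem_of_mem_erase hd,
    hb1 d (Finset.mem_of_mem_erase hd) (Finset.ne_of_mem_erase hd) hbd, ?_, hb1, hd1⟩
  intro r hr
  constructor
  · by_cases h1 : r = a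
    · simp [h1, det2]
    · by_cases h2 : r = b
      · rw [h2, det2]; apply le_of_eq; ring
      · exact (hb1 r hr h1 h2).le
  · by_cases h1 : r = a
    · simp [h1, det2]
    · by_cases h2 : r = d
      · rw [h2, det2]; apply le_of_eq; ring
      · exact (hd1 r hr h1 h2).le

/-- The two sides through a vertex `a` with neighbors `b, d`, with arbitrary positive
normalizations `α, β`, give a wedge description of the polygon at `a`. -/
lemma isWedge_of_neighbors (P : Finset Plane) {a b d : Plane} (ha : a ∈ P) (hb : b ∈ P)
    (hd : d ∈ P) (hbd : 0 < det2 (b - a) (d - a))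
    (h : ∀ r ∈ P, 0 ≤ det2 (b - a) (r - a) ∧ 0 ≤ det2 (r - a) (d - a))
    {α β : ℝ} (hα : 0 < α) (hβ : 0 < β) :
    ∃ η > 0, IsWedge (convexHull ℝ (P : Set Plane)) a ((-α) • detL (d - a)) (β • detL (b - a)) η := by
  set D := det2 (b - a) (d - a) with hD
  have hA : ∀ v, ((-α) • detL (d - a)) v = α * det2 v (d - a) := by
    intro v; simp [det2]; ring
  have hB : ∀ v, (β • detL (b - a)) v = β * det2 (b - a) v := by
    intro v; simp
  -- Cramer's rule in the basis `b - a, d - a`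
  have hv : ∀ v : Plane, v = (det2 v (d - a) / D) • (b - a) + (det2 (b - a) v / D) • (d - a) := by
    intro v
    ext i
    simp only [PiLp.add_apply, PiLp.smul_apply, smul_eq_mul]
    field_simp
    fin_cases i <;> simp [hD, det2] <;> ring
  refine ⟨min (α * D / 2) (β * D / 2), by positivity, ⟨?_, ?_, ?_⟩⟩
  · intro s hs
    have hconv : Convex ℝ {s : Plane | 0 ≤ ((-α) • detL (d - a)) (s - a) ∧
        0 ≤ (β • detL (b - a)) (s - a)} := by
      have e : {s : Plane | 0 ≤ ((-α) • detL (d - a)) (s - a) ∧ 0 ≤ (β • detL (b - a)) (s - a)} =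
          {s | ((-α) • detL (d - a)) a ≤ ((-α) • detL (d - a)) s} ∩
          {s | (β • detL (b - a)) a ≤ (β • detL (b - a)) s} := by
        ext s; simp only [map_sub, sub_nonneg]; rfl
      rw [e]
      exact (convex_halfSpace_ge (LinearMap.isLinear _) _).inter
        (convex_halfSpace_ge (LinearMap.isLinear _) _)
    refine convexHull_min ?_ hconv hs
    intro r hr
    rw [Set.mem_ofPred_eq, hA, hB]
    exact ⟨mul_nonneg hα.le (h r hr).2, mul_nonneg hβ.le (h r hr).1⟩
  · intro v h1 h2 h3 h4
    rw [hA] at h1 h3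
    rw [hB] at h2 h4
    have h3 := h3.trans (min_le_left _ _)
    have h4 := h4.trans (min_le_right _ _)
    have h1 : 0 ≤ det2 v (d - a) := nonneg_of_mul_nonneg_right h1 hα
    have h2 : 0 ≤ det2 (b - a) v := nonneg_of_mul_nonneg_right h2 hβ
    have h3 : det2 v (d - a) ≤ D / 2 := by
      apply le_of_mul_le_mul_left _ hα; linarith
    have h4 : det2 (b - a) v ≤ D / 2 := by
      apply le_of_mul_le_mul_left _ hβ; linarith
    set x := det2 v (d - a) / D with hx
    set y := det2 (b - a) v / D with hy
    have hx2 : x ≤ 1 / 2 := by rw [hx, div_le_iff₀ hbd]; linarith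
    have hy2 : y ≤ 1 / 2 := by rw [hy, div_le_iff₀ hbd]; linarith
    have e : a + v = (1 - x - y) • a + x • b + y • d := by
      rw [hv v, ← hx, ← hy]; module
    rw [e]
    have hc := convex_convexHull ℝ (P : Set Plane)
    have hmem : ∀ r ∈ P, r ∈ convexHull ℝ (P : Set Plane) :=
      fun r hr => subset_convexHull ℝ _ hr
    have := hc.sum_mem (t := Finset.univ) (w := ![1 - x - y, x, y]) (z := ![a, b, d])
      (by
        intro i _
        fin_cases i
        · show 0 ≤ 1 - x - y
          linarith
        · show 0 ≤ x
          positivity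
        · show 0 ≤ y
          positivity)
      (by simp [Fin.sum_univ_three]; ring)
      (by intro i _; fin_cases i <;> simp <;> apply hmem <;> assumption)
    simpa [Fin.sum_univ_three] using this
  · intro x y
    refine ⟨(x / α / D) • (b - a) + (y / β / D) • (d - a), ?_, ?_⟩
    · have : det2 ((x / α / D) • (b - a) + (y / β / D) • (d - a)) (d - a) = x / α / D * D := by
        simp [hD, det2]; ring
      rw [hA, this]; field_simp
    · have : det2 (b - a) ((x / α / D) • (b - a) + (y / β / D) • (d - a)) = y / β / D * D := by
        simp [hD, det2]; ring
      rw [hB, this]; field_simp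

/-- Two non-adjacent vertices `a`, `c` of the polygon, with side functionals normalized so that
the four affine functions satisfy `A₁(y - a) + C₁(y - c) = A₂(y - a) + C₂(y - c)`. The signs
alternate because the four side lines are tangent to a convex set in this cyclic order. -/
lemma exists_two_wedges (P : Finset Plane) (hcard : 4 ≤ P.card) (hpos : StrictlyConvexPosition P) :
    ∃ (a c : Plane) (A₁ A₂ C₁ C₂ : Plane →ₗ[ℝ] ℝ) (η : ℝ), 0 < η ∧
      IsWedge (convexHull ℝ (P : Set Plane)) a A₁ A₂ η ∧
      IsWedge (convexHull ℝ (P : Set Plane)) c C₁ C₂ η ∧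
      (∀ v, A₁ v + C₁ v = A₂ v + C₂ v) ∧ A₁ a + C₁ c = A₂ a + C₂ c ∧ C₁ (c - a) ≠ 0 := by
  classical
  obtain ⟨a, ha⟩ : P.Nonempty := by rw [← Finset.card_pos]; omega
  obtain ⟨b, hb, d, hd, hbd, hr, hrb, hrd⟩ := exists_neighbors P hcard hpos a ha
  obtain ⟨c, hc, hcn⟩ : ∃ c ∈ P, c ∉ ({a, b, d} : Finset Plane) := by
    by_contra! h
    have := Finset.card_le_card (show P ⊆ {a, b, d} from h)
    have := Finset.card_le_three (a := a) (b := b) (c := d)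
    omega
  simp only [Finset.mem_insert, Finset.mem_singleton, not_or] at hcn
  obtain ⟨hca, hcb, hcd⟩ := hcn
  obtain ⟨b', hb', d', hd', hbd', hr', hrb', hrd'⟩ := exists_neighbors P hcard hpos c hc
  have h1 := hrb c hc hca hcb
  have h2 := hrd c hc hca hcd
  have hab' : a ≠ b' := by
    rintro rfl
    have := (hr' d hd).1
    have e : det2 (a - c) (d - c) = - det2 (c - a) (d - a) := by simp [det2]; ring
    linarith
  have had' : a ≠ d' := by
    rintro rfl
    have := (hr' b hb).2
    have e : det2 (b - c) (a - c) = - det2 (b - a) (c - a) := by simp [det2]; ring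
    linarith
  have h3 := hrb' a ha (Ne.symm hca) hab'
  have h4 := hrd' a ha (Ne.symm hca) had'
  set D' := det2 (b' - c) (d' - c) with hD'
  set p := det2 (b - a) (c - a) with hp
  set q := det2 (c - a) (d - a) with hq
  set p' := det2 (b' - c) (a - c) with hp'
  set q' := det2 (a - c) (d' - c) with hq'
  set D := det2 (b - a) (d - a) with hD
  -- `A₁ - A₂ = det2 · (c - a)` and `C₁ - C₂ = det2 · (a - c)`, by the Plücker relation
  obtain ⟨η₁, hη₁, w₁⟩ := isWedge_of_neighbors P ha hb hd hbd hr
    (α := p / D) (β := q / D) (by positivity) (by positivity)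
  obtain ⟨η₂, hη₂, w₂⟩ := isWedge_of_neighbors P hc hb' hd' hbd' hr'
    (α := p' / D') (β := q' / D') (by positivity) (by positivity)
  have k1 : ∀ v, ((-(p / D)) • detL (d - a)) v = ((q / D) • detL (b - a)) v + det2 v (c - a) := by
    intro v
    simp only [LinearMap.smul_apply, detL_apply, smul_eq_mul]
    field_simp
    simp [hD, hp, hq, det2]; ring
  have k2 : ∀ v, ((-(p' / D')) • detL (d' - c)) v =
      ((q' / D') • detL (b' - c)) v - det2 v (c - a) := by
    intro v
    simp only [LinearMap.smul_apply, detL_apply, smul_eq_mul]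
    field_simp
    simp [hD', hp', hq', det2]; ring
  refine ⟨a, c, _, _, _, _, min η₁ η₂, lt_min hη₁ hη₂,
    ⟨w₁.sub, fun v x1 x2 x3 x4 => w₁.sup v x1 x2 (x3.trans (min_le_left _ _))
      (x4.trans (min_le_left _ _)), w₁.surj⟩,
    ⟨w₂.sub, fun v x1 x2 x3 x4 => w₂.sup v x1 x2 (x3.trans (min_le_right _ _))
      (x4.trans (min_le_right _ _)), w₂.surj⟩, ?_, ?_, ?_⟩
  · intro v; rw [k1, k2]; ring
  · rw [k1, k2]; simp [det2]; ring
  · have e : ((-(p' / D')) • detL (d' - c)) (c - a) = - (p' / D' * q') := by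
      simp only [LinearMap.smul_apply, detL_apply, smul_eq_mul, hq']
      simp only [det2, PiLp.sub_apply]; ring
    rw [e]
    have : 0 < p' / D' * q' := by positivity
    exact (neg_lt_zero.2 this).ne

/-! ### Realization by homothetic copies -/

theorem statement8 (P : Finset Plane) (hcard : 4 ≤ P.card)
    (hpos : StrictlyConvexPosition P)
    (S : Set Plane) (hS : S = convexHull ℝ (P : Set Plane)) (h0 : (0 : Plane) ∈ S)
    (m : ℕ) (hm : 1 ≤ m) (ε : ℝ) (hε : 0 < ε) :
    ∃ (I : Type) (_ : Fintype I) (c : I → ℝ) (p : I → Plane)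
      (X : I → Set Plane) (Y : Finset Plane),
      -- X is a family of homothetic copies with scaling factors in (1, 1+ε):
      (∀ i, 1 < c i ∧ c i < 1 + ε) ∧ (∀ i, X i = homCopy (c i) (p i) S) ∧
      -- every point of Y lies in exactly m members of X:
      (∀ y ∈ Y, Nat.card {i : I | y ∈ X i} = m) ∧
      -- for every 2-coloring of X, some point of Y sees only one color:
      (∀ coloring : I → Bool, ∃ y ∈ Y, ∀ i i',
        y ∈ X i → y ∈ X i' → coloring i = coloring i') ∧
      -- in particular: X is an m-fold covering of Y …
      (∀ y ∈ Y, ∃ t : Finset I, m ≤ t.card ∧ ∀ i ∈ t, (y : Plane) ∈ X i) ∧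
      -- … that cannot be split into two subfamilies each covering Y:
      ¬ ∃ I₁ : Set I, (∀ y ∈ Y, ∃ i ∈ I₁, (y : Plane) ∈ X i) ∧
        (∀ y ∈ Y, ∃ i ∈ I₁ᶜ, (y : Plane) ∈ X i) := by
  classical
  subst hS
  obtain ⟨a, c, A₁, A₂, C₁, C₂, η, hη, wA, wC, hlin, hconst, hne⟩ := exists_two_wedges P hcard hpos
  obtain ⟨I, hI, u, Rs, Bs, M, hrel, hu, hRs, hBs, hER, hEB, hcol⟩ := unsplittable m m
  -- a homothet `(1 + s)·S + t` with prescribed positions of the four sides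
  have hts : ∀ i, ∃ (t : Plane) (s : ℝ), A₁ (t + s • a) = -u i 0 ∧ A₂ (t + s • a) = -u i 1 ∧
      C₁ (t + s • c) = -u i 2 ∧ C₂ (t + s • c) = -u i 3 := by
    intro i
    obtain ⟨τ, hτ1, hτ2⟩ := wA.surj (-u i 0) (-u i 1)
    obtain ⟨s, hs⟩ : ∃ s : ℝ, s * C₁ (c - a) = -u i 2 - C₁ τ :=
      ⟨(-u i 2 - C₁ τ) / C₁ (c - a), by field_simp⟩
    have e1 : τ - s • a + s • a = τ := by abel
    have e2 : τ - s • a + s • c = τ + s • (c - a) := by rw [smul_sub]; abel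
    have h3 : C₁ (τ - s • a + s • c) = -u i 2 := by
      rw [e2, map_add, map_smul, smul_eq_mul, hs]; ring
    refine ⟨τ - s • a, s, by rw [e1, hτ1], by rw [e1, hτ2], h3, ?_⟩
    have h4 := hlin τ
    have h5 := hlin a
    simp only [map_add, map_sub, map_smul, smul_eq_mul] at h3 ⊢
    linear_combination h3 + hτ1 - hτ2 - h4 + s * h5 - s * hconst - hrel i
  choose t s hA1 hA2 hC1 hC2 using hts
  choose zA hzA1 hzA2 using fun r : ℝ × ℝ => wA.surj (-r.1) (-r.2)
  choose zC hzC1 hzC2 using fun r : ℝ × ℝ => wC.surj (-r.1) (-r.2)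
  obtain ⟨B, hB⟩ : ∃ B : ℝ, ∀ i, |s i| ≤ B := by
    obtain ⟨B, hB⟩ := (Set.finite_range fun i => |s i|).bddAbove
    exact ⟨B, fun i => hB ⟨i, rfl⟩⟩
  -- all perturbations are scaled by a small `δ`
  obtain ⟨δ, hδ, hδB, hδM⟩ : ∃ δ : ℝ, 0 < δ ∧ δ * |B| < ε / 2 ∧ δ * (2 * |M|) ≤ η := by
    have hB0 := abs_nonneg B
    have hM0 := abs_nonneg M
    refine ⟨min (ε / 2 / (|B| + 1)) (η / (2 * |M| + 1)), by positivity, ?_, ?_⟩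
    · calc _ ≤ ε / 2 / (|B| + 1) * |B| := by gcongr; exact min_le_left _ _
        _ < ε / 2 := by
          rw [div_mul_eq_mul_div, div_lt_iff₀ (by positivity)]; nlinarith
    · calc _ ≤ η / (2 * |M| + 1) * (2 * |M|) := by gcongr; exact min_le_right _ _
        _ ≤ η := by
          rw [div_mul_eq_mul_div, div_le_iff₀ (by positivity)]; nlinarith
  let e : I → ℝ := fun i => 1 + ε / 2 + δ * s i
  let p : I → Plane := fun i => δ • t i
  have he : ∀ i, 1 < e i ∧ e i < 1 + ε := by
    intro i
    have h1 : |δ * s i| < ε / 2 := by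
      rw [abs_mul, abs_of_pos hδ]
      refine lt_of_le_of_lt ?_ hδB
      exact mul_le_mul_of_nonneg_left ((hB i).trans (le_abs_self B)) hδ.le
    have := abs_lt.1 h1
    constructor <;> simp only [e] <;> linarith
  -- transfer of incidences at one of the two vertices
  have transfer : ∀ (a : Plane) (A₁ A₂ : Plane →ₗ[ℝ] ℝ),
      IsWedge (convexHull ℝ (P : Set Plane)) a A₁ A₂ η → ∀ (i : I) (j j' : Fin 4) (r : ℝ × ℝ)
      (z : Plane), A₁ (t i + s i • a) = -u i j → A₂ (t i + s i • a) = -u i j' →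
      A₁ z = -r.1 → A₂ z = -r.2 → |r.1| ≤ M → |r.2| ≤ M →
      ((1 + ε / 2) • a + δ • z ∈ homCopy (e i) (p i) (convexHull ℝ (P : Set Plane)) ↔
        r.1 ≤ u i j ∧ r.2 ≤ u i j') := by
    intro a A₁ A₂ w i j j' r z h1 h2 h3 h4 h5 h6
    have ev : (1 + ε / 2) • a + δ • z - (e i • a + p i) = δ • (z - (t i + s i • a)) := by
      simp only [e, p]; module
    have v1 : A₁ ((1 + ε / 2) • a + δ • z - (e i • a + p i)) = δ * (u i j - r.1) := by
      rw [ev, map_smul, map_sub, h1, h3, smul_eq_mul]; ring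
    have v2 : A₂ ((1 + ε / 2) • a + δ • z - (e i • a + p i)) = δ * (u i j' - r.2) := by
      rw [ev, map_smul, map_sub, h2, h4, smul_eq_mul]; ring
    have b1 := abs_le.1 (hu i j)
    have b2 := abs_le.1 (hu i j')
    have b3 := abs_le.1 h5
    have b4 := abs_le.1 h6
    have hM := le_abs_self M
    rw [w.mem_homCopy (he i).1, v1, v2, mul_nonneg_iff_of_pos_left hδ,
      mul_nonneg_iff_of_pos_left hδ, sub_nonneg, sub_nonneg]
    · rw [v1]; refine le_trans ?_ hδM; gcongr; linarith
    · rw [v2]; refine le_trans ?_ hδM; gcongr; linarith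
  let yA : ℝ × ℝ → Plane := fun r => (1 + ε / 2) • a + δ • zA r
  let yC : ℝ × ℝ → Plane := fun r => (1 + ε / 2) • c + δ • zC r
  let X : I → Set Plane := fun i => homCopy (e i) (p i) (convexHull ℝ (P : Set Plane))
  have hyA : ∀ r ∈ Rs, ∀ i, yA r ∈ X i ↔ r.1 ≤ u i 0 ∧ r.2 ≤ u i 1 := fun r hr i =>
    transfer a A₁ A₂ wA i 0 1 r _ (hA1 i) (hA2 i) (hzA1 r) (hzA2 r) (hRs r hr).1 (hRs r hr).2
  have hyC : ∀ r ∈ Bs, ∀ i, yC r ∈ X i ↔ r.1 ≤ u i 2 ∧ r.2 ≤ u i 3 := fun r hr i =>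
    transfer c C₁ C₂ wC i 2 3 r _ (hC1 i) (hC2 i) (hzC1 r) (hzC2 r) (hBs r hr).1 (hBs r hr).2
  let Y : Finset Plane := Rs.image yA ∪ Bs.image yC
  have hE : ∀ y ∈ Y, ∃ E : Finset I, E.card = m ∧ ∀ i, i ∈ E ↔ y ∈ X i := by
    intro y hy
    rcases Finset.mem_union.1 hy with hy | hy
    · obtain ⟨r, hr, rfl⟩ := Finset.mem_image.1 hy
      obtain ⟨E, hEc, hE⟩ := hER r hr
      exact ⟨E, hEc, fun i => by rw [hE, hyA r hr]⟩
    · obtain ⟨r, hr, rfl⟩ := Finset.mem_image.1 hy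
      obtain ⟨E, hEc, hE⟩ := hEB r hr
      exact ⟨E, hEc, fun i => by rw [hE, hyC r hr]⟩
  have hmono : ∀ coloring : I → Bool, ∃ y ∈ Y, ∀ i i',
      y ∈ X i → y ∈ X i' → coloring i = coloring i' := by
    intro col
    rcases hcol col with ⟨r, hr, h⟩ | ⟨r, hr, h⟩
    · refine ⟨yA r, Finset.mem_union_left _ (Finset.mem_image_of_mem _ hr), fun i i' hi hi' => ?_⟩
      rw [hyA r hr] at hi hi'
      rw [h i hi.1 hi.2, h i' hi'.1 hi'.2]
    · refine ⟨yC r, Finset.mem_union_right _ (Finset.mem_image_of_mem _ hr), fun i i' hi hi' => ?_⟩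
      rw [hyC r hr] at hi hi'
      rw [h i hi.1 hi.2, h i' hi'.1 hi'.2]
  refine ⟨I, hI, e, p, X, Y, he, fun i => rfl, ?_, hmono, ?_, ?_⟩
  · intro y hy
    obtain ⟨E, hEc, hE⟩ := hE y hy
    have : {i : I | y ∈ X i} = (E : Set I) := by ext i; simp [hE]
    rw [this, ← hEc]; simp
  · intro y hy
    obtain ⟨E, hEc, hE⟩ := hE y hy
    exact ⟨E, hEc.ge, fun i hi => (hE i).1 hi⟩
  · rintro ⟨I₁, h1, h2⟩
    obtain ⟨y, hy, h⟩ := hmono fun i => decide (i ∈ I₁)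
    obtain ⟨i, hi, hi'⟩ := h1 y hy
    obtain ⟨j, hj, hj'⟩ := h2 y hy
    have := h i j hi' hj'
    simp only [decide_eq_decide] at this
    exact hj (this.1 hi)
end
end
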